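/- arXiv:1502.07205 — 5 statements merged into one kernel-verified Lean document; each statement's English description precedes it below -/
import Mathlib

section
/- Let φ: [0,1] → ℝ be continuous and convex, differentiable on (0,1) with φ' continuous on (0,1), and suppose φ' is operator monotone on (0,1). Let A, B be hermitian n×n complex matrices with all eigenvalues of A in [0,1] and all eigenvalues of B in (0,1), and let X be an m×n complex matrix with X*X ≤ 1 (i.e., 1 − X*X positive semidefinite) such that all eigenvalues of XAX* lie in [0,1] and all eigenvalues of XBX* lie in (0,1). Then H(XAX*, XBX*) ≤ H(A, B). -/
/-! The relative entropy is an integral, along the segment `C t = B + t (A - B)`, of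
`tr ((φ' (C t) - φ' B) (A - B))`, so it suffices to show that
`tr ((φ' A - φ' B) (A - B))` does not increase when `A` and `B` are compressed by `X`.

In eigenbases, the difference of the two traces is a finite sum `∑ c i * φ' (x i)` with `x i ∈ (0,1)`
and real coefficients that do not depend on `φ'`. Such a sum is nonnegative for every operator
monotone function as soon as it is nonnegative for the functions `x ↦ 1 / (l - x)` with `l < 0` or
`1 < l` (`IsOperatorMonotoneOn01.sum_mul_nonneg_of_forall_resolvent`). This plays the role of
Löwner's integral representation, and it is proved directly. After clearing denominators, the
hypothesis says that the polynomial `p` with `p x = c x ∏ (x - y)` at the nodes has constant sign on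
`(1, ∞)` and on `(-∞, 0)`. Hence `p` is a product of factors `X - r` with `r ∈ [0,1]` and of a sum of
two squares (`exists_factorization`), and the sum in question is a divided difference of `p φ'`. That
divided differences of `h² φ'` over an even number of nodes are nonnegative is operator monotonicity
for two real matrices with interlacing spectra whose difference has rank one
(`IsOperatorMonotoneOn01.interlacing`); the factors `X - r` are absorbed by adding nodes near `r`.

For `1 / (l - x)` the trace inequality compares `tr (R_A D R_B D)`, where `R_A`, `R_B` are resolvents
and `D = A - B`, with its compressed version; it follows from `Xᴴ (X M Xᴴ + N)⁻¹ X ≤ M⁻¹` for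
`N ≥ 0`, which is a Schur complement argument (`posSemidef_inv_sub_conj_inv`).

The integration is carried out with Riemann sums: Klein's inequality says that
`t ↦ tr (φ' (C t) (A - B))` is a subgradient of `t ↦ tr (φ (C t))`, and lower and upper Riemann sums
of a monotone function differ by a telescoping sum (`sub_sub_le_sub_sub_of_subgradient`). The
endpoint `t = 1`, where the spectrum of `A` may touch `0` or `1`, is reached by continuity. -/

open scoped Matrix ComplexOrder

/-- A function `f` is operator monotone on `(0,1)`: for every `k` and all hermitian `k × k`
complex matrices `S, T` with all eigenvalues in `(0,1)` such that `T - S` is positive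
semidefinite, `f(T) - f(S)` is positive semidefinite (functional calculus). -/
def IsOperatorMonotoneOn01 (f : ℝ → ℝ) : Prop :=
  ∀ (k : ℕ) (S T : Matrix (Fin k) (Fin k) ℂ) (hS : S.IsHermitian) (hT : T.IsHermitian),
    (∀ i, hS.eigenvalues i ∈ Set.Ioo (0:ℝ) 1) →
    (∀ i, hT.eigenvalues i ∈ Set.Ioo (0:ℝ) 1) →
    (T - S).PosSemidef → (cfc f T - cfc f S).PosSemidef

/-- The relative entropy `H(A,B) = tr[φ(A) − φ(B) − φ'(B)(A−B)]` of two hermitian matrices,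
with functions applied via the functional calculus. -/
noncomputable def relEntropy {n : ℕ} (φ φ' : ℝ → ℝ) (A B : Matrix (Fin n) (Fin n) ℂ) : ℝ :=
  (Matrix.trace (cfc φ A - cfc φ B - cfc φ' B * (A - B))).re

/-! ### Functional calculus of a diagonalized matrix -/

section

open Polynomial

lemma spectrum_real_conj_diagonal {k : ℕ} (U : unitary (Matrix (Fin k) (Fin k) ℂ)) (b : Fin k → ℝ) :
    spectrum ℝ ((U : Matrix (Fin k) (Fin k) ℂ) * Matrix.diagonal (fun i => (b i : ℂ)) *
      star (U : Matrix (Fin k) (Fin k) ℂ)) = Set.range b := by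
  rw [Unitary.spectrum_star_right_conjugate]
  ext r
  rw [← spectrum.algebraMap_mem_iff ℂ, spectrum_diagonal]
  simp

lemma cfc_conj_diagonal {k : ℕ} (f : ℝ → ℝ) (U : unitary (Matrix (Fin k) (Fin k) ℂ))
    (b : Fin k → ℝ) :
    cfc f ((U : Matrix (Fin k) (Fin k) ℂ) * Matrix.diagonal (fun i => (b i : ℂ)) *
      star (U : Matrix (Fin k) (Fin k) ℂ)) =
    (U : Matrix (Fin k) (Fin k) ℂ) * Matrix.diagonal (fun i => (f (b i) : ℂ)) *
      star (U : Matrix (Fin k) (Fin k) ℂ) := by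
  -- On the finite spectrum, `f` agrees with an interpolating polynomial.
  obtain ⟨p, hp⟩ : ∃ p : ℝ[X], ∀ i, p.eval (b i) = f (b i) := by
    refine ⟨Lagrange.interpolate (Finset.univ.image b) id f, fun i => ?_⟩
    exact Lagrange.eval_interpolate_at_node (v := id) f (Function.injective_id.injOn) (by simp)
  have hsa : IsSelfAdjoint ((U : Matrix (Fin k) (Fin k) ℂ) * Matrix.diagonal (fun i => (b i : ℂ)) *
      star (U : Matrix (Fin k) (Fin k) ℂ)) := by
    apply IsSelfAdjoint.conjugate
    rw [isSelfAdjoint_iff, Matrix.star_eq_conjTranspose, Matrix.diagonal_conjTranspose]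
    congr 1; ext i; simp
  have h1 : cfc f ((U : Matrix (Fin k) (Fin k) ℂ) * Matrix.diagonal (fun i => (b i : ℂ)) *
      star (U : Matrix (Fin k) (Fin k) ℂ)) = cfc p.eval ((U : Matrix (Fin k) (Fin k) ℂ) *
      Matrix.diagonal (fun i => (b i : ℂ)) * star (U : Matrix (Fin k) (Fin k) ℂ)) := by
    apply cfc_congr
    rw [spectrum_real_conj_diagonal]
    rintro _ ⟨i, rfl⟩
    exact (hp i).symm
  rw [h1, cfc_polynomial p _ hsa]
  have h2 := Polynomial.aeval_algHom_apply
    ((Unitary.conjStarAlgAut ℝ (Matrix (Fin k) (Fin k) ℂ) U : _ ≃⋆ₐ[ℝ] _).toAlgEquiv.toAlgHom.comp (Matrix.diagonalAlgHom (n := Fin k) (α := ℂ) ℝ))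
    (fun i => (b i : ℂ)) p
  have h3 : Polynomial.aeval (fun i => (b i : ℂ)) p = fun i => (f (b i) : ℂ) := by
    ext i
    rw [← hp i]
    have := Polynomial.aeval_algHom_apply (Pi.evalAlgHom ℝ (fun _ : Fin k => ℂ) i)
      (fun i => (b i : ℂ)) p
    rw [Pi.evalAlgHom_apply, Pi.evalAlgHom_apply] at this
    rw [← this]
    exact Polynomial.aeval_ofReal p (b i)
  rw [h3] at h2
  simpa [Unitary.conjStarAlgAut_apply] using h2

/-! ### Divided differences of operator monotone functions -/

/-- Operator monotonicity applied to a pair of real matrices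
`diag a ≤ Wᵀ diag b W` whose difference is the rank-one matrix `u uᵀ`. -/
lemma IsOperatorMonotoneOn01.sum_le_sum {f : ℝ → ℝ} (hf : IsOperatorMonotoneOn01 f) {m : ℕ}
    (a b u : Fin m → ℝ) (ha : ∀ i, a i ∈ Set.Ioo (0:ℝ) 1) (hb : ∀ i, b i ∈ Set.Ioo (0:ℝ) 1)
    (W : Matrix (Fin m) (Fin m) ℝ) (hW : Wᵀ * W = 1)
    (hu : Wᵀ * Matrix.diagonal b * W = Matrix.diagonal a + Matrix.vecMulVec u u)
    (ξ : Fin m → ℝ) :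
    ∑ i, f (a i) * ξ i ^ 2 ≤ ∑ j, f (b j) * (W *ᵥ ξ) j ^ 2 := by
  let Wc : Matrix (Fin m) (Fin m) ℂ := W.map (algebraMap ℝ ℂ)
  have hWH : Wcᴴ = Wᵀ.map (algebraMap ℝ ℂ) := by ext; simp [Wc]
  have hWc : Wcᴴ * Wc = 1 := by
    rw [hWH, ← Matrix.map_mul, hW]; simp
  let U : unitary (Matrix (Fin m) (Fin m) ℂ) := ⟨Wcᴴ, by
    rw [Unitary.mem_iff, Matrix.star_eq_conjTranspose, Matrix.conjTranspose_conjTranspose]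
    exact ⟨mul_eq_one_comm.mp hWc, hWc⟩⟩
  have hdiag : ∀ c : Fin m → ℝ, (Matrix.diagonal fun i => (c i : ℂ)) =
      (Matrix.diagonal c).map (algebraMap ℝ ℂ) := fun c => by
    rw [Matrix.diagonal_map (map_zero _)]; rfl
  have hUc : ∀ c : Fin m → ℝ, (U : Matrix (Fin m) (Fin m) ℂ) *
      Matrix.diagonal (fun i => (c i : ℂ)) * star (U : Matrix (Fin m) (Fin m) ℂ) =
      (Wᵀ * Matrix.diagonal c * W).map (algebraMap ℝ ℂ) := fun c => by
    rw [Matrix.map_mul, Matrix.map_mul, hdiag, ← hWH, Matrix.star_eq_conjTranspose]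
    simp [U, Wc]
  have h1c : ∀ c : Fin m → ℝ, ((1 : unitary (Matrix (Fin m) (Fin m) ℂ)) :
      Matrix (Fin m) (Fin m) ℂ) * Matrix.diagonal (fun i => (c i : ℂ)) *
      star ((1 : unitary (Matrix (Fin m) (Fin m) ℂ)) : Matrix (Fin m) (Fin m) ℂ) =
      (Matrix.diagonal c).map (algebraMap ℝ ℂ) := fun c => by
    rw [OneMemClass.coe_one, star_one, one_mul, mul_one, hdiag]
  have hherm : ∀ (V : unitary (Matrix (Fin m) (Fin m) ℂ)) (c : Fin m → ℝ),
      ((V : Matrix (Fin m) (Fin m) ℂ) * Matrix.diagonal (fun i => (c i : ℂ)) *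
      star (V : Matrix (Fin m) (Fin m) ℂ)).IsHermitian := fun V c => by
    refine Matrix.isHermitian_mul_mul_conjTranspose _ ?_
    rw [Matrix.IsHermitian, Matrix.diagonal_conjTranspose]
    congr 1; ext i; simp
  have hev : ∀ (V : unitary (Matrix (Fin m) (Fin m) ℂ)) (c : Fin m → ℝ),
      (∀ i, c i ∈ Set.Ioo (0:ℝ) 1) → ∀ i, (hherm V c).eigenvalues i ∈ Set.Ioo (0:ℝ) 1 := by
    intro V c hc i
    have := (hherm V c).eigenvalues_mem_spectrum_real i
    rw [spectrum_real_conj_diagonal] at this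
    obtain ⟨j, hj⟩ := this
    rw [← hj]; exact hc j
  have key := hf m _ _ (hherm 1 a) (hherm U b) (hev 1 a ha) (hev U b hb) (by
    rw [h1c, hUc, hu, Matrix.map_add _ (fun x y => map_add _ x y), add_sub_cancel_left]
    have : (Matrix.vecMulVec u u).map (algebraMap ℝ ℂ) =
        Matrix.vecMulVec (fun i => (u i : ℂ)) (star fun i => (u i : ℂ)) := by
      ext; simp [Matrix.vecMulVec_apply]
    rw [this]
    exact Matrix.posSemidef_vecMulVec_self_star _)
  rw [cfc_conj_diagonal, cfc_conj_diagonal, h1c (fun i => f (a i)), hUc (fun i => f (b i)),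
    ← Matrix.map_sub _ (fun x y => map_sub _ x y)] at key
  have h2 := key.dotProduct_mulVec_nonneg (fun i => (ξ i : ℂ))
  have h3 : (star (fun i => (ξ i : ℂ))) ⬝ᵥ
      ((Wᵀ * Matrix.diagonal (fun i => f (b i)) * W -
        Matrix.diagonal (fun i => f (a i))).map (algebraMap ℝ ℂ) *ᵥ (fun i => (ξ i : ℂ))) =
      ((ξ ⬝ᵥ ((Wᵀ * Matrix.diagonal (fun i => f (b i)) * W -
        Matrix.diagonal (fun i => f (a i))) *ᵥ ξ) : ℝ) : ℂ) := by
    simp [dotProduct, Matrix.mulVec]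
  rw [h3, Complex.zero_le_real, Matrix.sub_mulVec, dotProduct_sub, sub_nonneg,
    ← Matrix.mulVec_mulVec, ← Matrix.mulVec_mulVec, Matrix.dotProduct_mulVec ξ Wᵀ,
    Matrix.vecMul_transpose] at h2
  simp only [dotProduct, Matrix.mulVec_diagonal] at h2
  refine le_trans (le_of_eq ?_) (h2.trans (le_of_eq ?_)) <;>
  · refine Finset.sum_congr rfl fun i _ => ?_
    ring

/-- The divided-difference inequality at interlacing nodes `a i`, `b i`. Evaluation at the `a i` and
at the `b i` are two orthonormal coordinate systems on the polynomials of degree `< m`, and passing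
from one to the other changes multiplication by `X` by a positive rank-one matrix. -/
lemma IsOperatorMonotoneOn01.interlacing {f : ℝ → ℝ} (hf : IsOperatorMonotoneOn01 f) {m : ℕ}
    (a b : Fin m → ℝ) (ha : ∀ i, a i ∈ Set.Ioo (0:ℝ) 1) (hb : ∀ i, b i ∈ Set.Ioo (0:ℝ) 1)
    (hv : Function.Injective (Sum.elim a b)) (hab : ∀ i, a i < b i)
    (hsa : ∀ i j, i ≠ j → 0 < (a j - a i) * (a j - b i))
    (hsb : ∀ i j, i ≠ j → 0 < (b j - a i) * (b j - b i))
    (h : ℝ[X]) (hh : h.degree < m) :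
    0 ≤ ∑ s, Lagrange.nodalWeight Finset.univ (Sum.elim a b) s *
      (h.eval (Sum.elim a b s) ^ 2 * f (Sum.elim a b s)) := by
  set v : Fin m ⊕ Fin m → ℝ := Sum.elim a b with hvdef
  have hva : ∀ i, v (Sum.inl i) = a i := fun i => rfl
  have hvb : ∀ i, v (Sum.inr i) = b i := fun i => rfl
  have hainj : Function.Injective a := fun i j hij => Sum.inl_injective (hv (by simpa [v] using hij))
  set w := Lagrange.nodalWeight Finset.univ v with hw
  have hwb : ∀ j, 0 < w (Sum.inr j) := by
    intro j
    have h1 : w (Sum.inr j) = (b j - a j)⁻¹ *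
        ∏ i ∈ Finset.univ.erase j, ((b j - a i) * (b j - b i))⁻¹ := by
      have h2 : (Finset.univ.erase (Sum.inr j) : Finset (Fin m ⊕ Fin m)) =
          Finset.univ.disjSum (Finset.univ.erase j) := by
        ext (i | i) <;> simp
      rw [hw, Lagrange.nodalWeight, h2, Finset.prod_disjSum,
        ← Finset.mul_prod_erase Finset.univ _ (Finset.mem_univ j), mul_assoc,
        ← Finset.prod_mul_distrib]
      simp only [hva, hvb, mul_inv]
    rw [h1]
    refine mul_pos (inv_pos.2 (sub_pos.2 (hab j))) (Finset.prod_pos fun i hi => inv_pos.2 ?_)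
    exact hsb i j (Finset.ne_of_mem_erase hi)
  have hwa : ∀ j, 0 < - w (Sum.inl j) := by
    intro j
    have h1 : w (Sum.inl j) = (a j - b j)⁻¹ *
        ∏ i ∈ Finset.univ.erase j, ((a j - a i) * (a j - b i))⁻¹ := by
      have h2 : (Finset.univ.erase (Sum.inl j) : Finset (Fin m ⊕ Fin m)) =
          (Finset.univ.erase j).disjSum Finset.univ := by
        ext (i | i) <;> simp
      rw [hw, Lagrange.nodalWeight, h2, Finset.prod_disjSum,
        ← Finset.mul_prod_erase Finset.univ (fun i => (v (Sum.inl j) - v (Sum.inr i))⁻¹)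
          (Finset.mem_univ j), mul_left_comm,
        ← Finset.prod_mul_distrib]
      simp only [hva, hvb, mul_inv]
    rw [h1, ← neg_mul, neg_inv, neg_sub]
    refine mul_pos (inv_pos.2 (sub_pos.2 (hab j))) (Finset.prod_pos fun i hi => inv_pos.2 ?_)
    exact hsa i j (Finset.ne_of_mem_erase hi)
  set α : Fin m → ℝ := fun i => - w (Sum.inl i) with hα
  set β : Fin m → ℝ := fun i => w (Sum.inr i) with hβ
  have hα' : ∀ i, √(α i) * √(α i) = α i := fun i => Real.mul_self_sqrt (hwa i).le
  have hβ' : ∀ i, √(β i) * √(β i) = β i := fun i => Real.mul_self_sqrt (hwb i).le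
  have hα0 : ∀ i, √(α i) ≠ 0 := fun i => (Real.sqrt_pos.2 (hwa i)).ne'
  -- The divided difference over all nodes is the coefficient of `X ^ (2 * m - 1)`.
  have hcoeff : ∀ P : ℝ[X], P.degree < (m + m : ℕ) →
      ∑ j, β j * P.eval (b j) = ∑ i, α i * P.eval (a i) + P.coeff (m + m - 1) := by
    intro P hP
    have h1 := Lagrange.coeff_eq_sum (s := Finset.univ) (v := v) hv.injOn (P := P)
      (by simpa using hP)
    rw [Finset.card_univ, Fintype.card_sum, Fintype.card_fin, Fintype.sum_sum_type] at h1
    have h2 : ∀ s, P.eval (v s) / ∏ j ∈ Finset.univ.erase s, (v s - v j) = w s * P.eval (v s) := by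
      intro s
      rw [hw, Lagrange.nodalWeight, Finset.prod_inv_distrib, div_eq_inv_mul]
    simp only [h2] at h1
    rw [h1]
    simp [hα, hβ, hva, hvb]
  let ℓ : Fin m → ℝ[X] := fun i => Lagrange.basis Finset.univ a i
  have hℓ : ∀ i k, (ℓ i).eval (a k) = if i = k then 1 else 0 := by
    intro i k
    split_ifs with hik
    · subst hik
      exact Lagrange.eval_basis_self hainj.injOn (Finset.mem_univ _)
    · exact Lagrange.eval_basis_of_ne hik (Finset.mem_univ _)
  have hℓd : ∀ i, (ℓ i).natDegree = m - 1 := by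
    intro i
    simpa using Lagrange.natDegree_basis (v := a) hainj.injOn (Finset.mem_univ i)
  let W : Matrix (Fin m) (Fin m) ℝ := Matrix.of fun j i => √(β j) * (ℓ i).eval (b j) / √(α i)
  let c : Fin m → ℝ := fun i => (ℓ i).coeff (m - 1)
  have hmain := hf.sum_le_sum a b (fun i => c i / √(α i)) ha hb W ?_ ?_
    (fun i => √(α i) * h.eval (a i))
  · have hWξ : ∀ j, (W *ᵥ fun i => √(α i) * h.eval (a i)) j = √(β j) * h.eval (b j) := by
      intro j
      have h1 := Lagrange.eq_interpolate (s := Finset.univ) (v := a) (f := h) hainj.injOn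
        (by simpa using hh)
      have h2 := congrArg (Polynomial.eval (b j)) h1
      rw [Lagrange.interpolate_apply, Polynomial.eval_finsetSum] at h2
      rw [h2, Finset.mul_sum, Matrix.mulVec, dotProduct]
      refine Finset.sum_congr rfl fun i _ => ?_
      simp only [W, Matrix.of_apply, ℓ, Polynomial.eval_mul, Polynomial.eval_C]
      field_simp [hα0 i]
    have hα2 : ∀ i, √(α i) ^ 2 = α i := fun i => Real.sq_sqrt (hwa i).le
    have hβ2 : ∀ i, √(β i) ^ 2 = β i := fun i => Real.sq_sqrt (hwb i).le
    simp only [hWξ, mul_pow, hα2, hβ2] at hmain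
    rw [Fintype.sum_sum_type, ← neg_le_iff_add_nonneg', ← Finset.sum_neg_distrib]
    refine le_trans (le_of_eq ?_) (hmain.trans (le_of_eq ?_))
    · refine Finset.sum_congr rfl fun i _ => ?_
      simp only [hα, hva]; ring
    · refine Finset.sum_congr rfl fun i _ => ?_
      simp only [hβ, hvb]; ring
  · ext i k
    have hm : 0 < m := i.pos
    have hdeg : (ℓ i * ℓ k).natDegree < m + m - 1 :=
      (Polynomial.natDegree_mul_le).trans_lt (by rw [hℓd, hℓd]; omega)
    have h1 := hcoeff (ℓ i * ℓ k) ((Polynomial.degree_le_natDegree).trans_lt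
      (by exact_mod_cast (by omega : (ℓ i * ℓ k).natDegree < m + m)))
    rw [Polynomial.coeff_eq_zero_of_natDegree_lt hdeg, add_zero] at h1
    simp only [Polynomial.eval_mul, hℓ] at h1
    have h2 : (Wᵀ * W) i k = (∑ j, β j * ((ℓ i).eval (b j) * (ℓ k).eval (b j))) /
        (√(α i) * √(α k)) := by
      rw [Matrix.mul_apply, Finset.sum_div]
      refine Finset.sum_congr rfl fun j _ => ?_
      rw [← hβ' j]
      simp only [W, Matrix.of_apply, Matrix.transpose_apply]
      field_simp
    rw [h2, h1, Matrix.one_apply]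
    by_cases hik : i = k
    · subst hik
      simp only [mul_ite, mul_zero, Finset.sum_ite_eq, Finset.mem_univ,
        if_true, mul_one, hα']
      exact div_self (hwa i).ne'
    · rw [if_neg hik, Finset.sum_eq_zero, zero_div]
      intro j _
      split_ifs with h3 h4 <;> simp_all
  · ext i k
    have hm : 0 < m := i.pos
    have hdeg : (X * (ℓ i * ℓ k)).natDegree < m + m := by
      refine (Polynomial.natDegree_mul_le).trans_lt ?_
      have := Polynomial.natDegree_mul_le (p := ℓ i) (q := ℓ k)
      rw [hℓd, hℓd] at this
      rw [Polynomial.natDegree_X]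
      omega
    have h1 := hcoeff (X * (ℓ i * ℓ k)) ((Polynomial.degree_le_natDegree).trans_lt
      (by exact_mod_cast hdeg))
    have h3 : (X * (ℓ i * ℓ k)).coeff (m + m - 1) = c i * c k := by
      rw [show m + m - 1 = ((m - 1) + (m - 1)) + 1 by omega, Polynomial.coeff_X_mul]
      exact Polynomial.coeff_mul_add_eq_of_natDegree_le (hℓd i).le (hℓd k).le
    rw [h3] at h1
    simp only [Polynomial.eval_mul, hℓ, Polynomial.eval_X] at h1
    have h2 : (Wᵀ * Matrix.diagonal b * W) i k =
        (∑ j, β j * (b j * ((ℓ i).eval (b j) * (ℓ k).eval (b j)))) / (√(α i) * √(α k)) := by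
      rw [Matrix.mul_apply, Finset.sum_div]
      refine Finset.sum_congr rfl fun j _ => ?_
      rw [← hβ' j]
      simp only [W, Matrix.of_apply, Matrix.mul_diagonal, Matrix.transpose_apply]
      field_simp
    rw [h2, h1, Matrix.add_apply, Matrix.vecMulVec_apply, Matrix.diagonal_apply, add_div,
      mul_div_mul_comm]
    congr 1
    by_cases hik : i = k
    · subst hik
      simp only [mul_ite, mul_zero, Finset.sum_ite_eq, Finset.mem_univ,
        if_true, mul_one, hα']
      exact mul_div_cancel_left₀ _ (hwa i).ne'
    · rw [if_neg hik, Finset.sum_eq_zero, zero_div]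
      intro j _
      split_ifs with h3 h4 <;> simp_all

/-- The divided difference of `h² f` over an even number of nodes is nonnegative. -/
lemma IsOperatorMonotoneOn01.dividedDifference_sq {f : ℝ → ℝ} (hf : IsOperatorMonotoneOn01 f)
    (m : ℕ) (F : Finset ℝ) (hF : ∀ x ∈ F, x ∈ Set.Ioo (0:ℝ) 1) (hcard : F.card = m + m)
    (h : ℝ[X]) (hh : h.degree < m) :
    0 ≤ ∑ x ∈ F, Lagrange.nodalWeight F id x * (h.eval x ^ 2 * f x) := by
  set e := F.orderEmbOfFin hcard with he
  -- In increasing order the nodes alternate between the two families.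
  let a : Fin m → ℝ := fun i => e ⟨2 * i, by omega⟩
  let b : Fin m → ℝ := fun i => e ⟨2 * i + 1, by omega⟩
  have heF : ∀ i, e i ∈ F := fun i => F.orderEmbOfFin_mem hcard i
  have hlt : ∀ i j, i < j → e i < e j := fun i j hij => e.strictMono hij
  have hv : Function.Injective (Sum.elim a b) := by
    rintro (i | i) (j | j) hij <;>
    · have := e.injective hij
      simp only [Fin.mk.injEq] at this
      first
        | (exfalso; omega)
        | (congr 1; ext; omega)
  have key := hf.interlacing a b (fun i => hF _ (heF _)) (fun i => hF _ (heF _)) hv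
    (fun i => hlt _ _ (by simp [Fin.lt_def])) ?_ ?_ h hh
  · have hFm : F = Finset.univ.map ⟨Sum.elim a b, hv⟩ := by
      symm
      apply Finset.eq_of_subset_of_card_le
      · intro x hx
        simp only [Finset.mem_map, Finset.mem_univ, true_and, Function.Embedding.coeFn_mk] at hx
        obtain ⟨i | i, rfl⟩ := hx <;> exact heF _
      · simp [hcard]
    refine key.trans (le_of_eq ?_)
    conv_rhs => rw [hFm, Finset.sum_map]
    refine Finset.sum_congr rfl fun s _ => ?_
    simp only [Function.Embedding.coeFn_mk]
    congr 1
    rw [Lagrange.nodalWeight, Lagrange.nodalWeight]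
    have : (Finset.univ.map ⟨Sum.elim a b, hv⟩).erase (Sum.elim a b s) =
        (Finset.univ.erase s).map ⟨Sum.elim a b, hv⟩ := by
      rw [Finset.map_erase]; rfl
    rw [this, Finset.prod_map]
    rfl
  · intro i j hij
    rcases lt_or_gt_of_ne hij with h1 | h1 <;> rw [Fin.lt_def] at h1
    · exact mul_pos (sub_pos.2 (hlt _ _ (by simp only [Fin.lt_def]; omega)))
        (sub_pos.2 (hlt _ _ (by simp only [Fin.lt_def]; omega)))
    · exact mul_pos_of_neg_of_neg (sub_neg.2 (hlt _ _ (by simp only [Fin.lt_def]; omega)))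
        (sub_neg.2 (hlt _ _ (by simp only [Fin.lt_def]; omega)))
  · intro i j hij
    rcases lt_or_gt_of_ne hij with h1 | h1 <;> rw [Fin.lt_def] at h1
    · exact mul_pos (sub_pos.2 (hlt _ _ (by simp only [Fin.lt_def]; omega)))
        (sub_pos.2 (hlt _ _ (by simp only [Fin.lt_def]; omega)))
    · exact mul_pos_of_neg_of_neg (sub_neg.2 (hlt _ _ (by simp only [Fin.lt_def]; omega)))
        (sub_neg.2 (hlt _ _ (by simp only [Fin.lt_def]; omega)))

/-- Divided differences of `∏ (X - r) h² f` with all `r ∈ [0, 1]` are nonnegative as well: adjoining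
a node `s` near `r` turns the factor `X - s` into the square `(X - s)²`, and then `s → r`. -/
lemma IsOperatorMonotoneOn01.dividedDifference_prod {f : ℝ → ℝ} (hf : IsOperatorMonotoneOn01 f)
    (m : ℕ) (L : List ℝ) (hL : ∀ r ∈ L, r ∈ Set.Icc (0:ℝ) 1) :
    ∀ (F : Finset ℝ), (∀ x ∈ F, x ∈ Set.Ioo (0:ℝ) 1) → F.card + L.length = m + m →
    ∀ h : ℝ[X], h.natDegree + L.length < m →
    0 ≤ ∑ x ∈ F, Lagrange.nodalWeight F id x *
      ((L.map fun r => x - r).prod * (h.eval x ^ 2 * f x)) := by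
  induction L with
  | nil =>
    intro F hF hcard h hh
    simpa using hf.dividedDifference_sq m F hF (by simpa using hcard) h
      ((Polynomial.degree_le_natDegree).trans_lt (by simpa using hh))
  | cons r L ih =>
    intro F hF hcard h hh
    set G : ℝ → ℝ := fun s => ∑ x ∈ F, Lagrange.nodalWeight F id x *
      ((x - s) * (L.map fun r => x - r).prod * (h.eval x ^ 2 * f x)) with hG
    have hGc : Continuous G := by fun_prop
    have hGs : ∀ s ∈ Set.Ioo (0:ℝ) 1 ∩ (↑F)ᶜ, 0 ≤ G s := by
      rintro s ⟨hs, hsF⟩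
      rw [Set.mem_compl_iff, Finset.mem_coe] at hsF
      have h1 := ih (fun r hr => hL r (List.mem_cons_of_mem _ hr)) (insert s F)
        (by
          intro x hx
          rcases Finset.mem_insert.1 hx with rfl | hx
          · exact hs
          · exact hF x hx)
        (by rw [Finset.card_insert_of_notMem hsF, ← hcard, List.length_cons]; ring)
        ((X - C s) * h)
        (by
          have := Polynomial.natDegree_mul_le (p := X - C s) (q := h)
          rw [Polynomial.natDegree_X_sub_C] at this
          rw [List.length_cons] at hh
          omega)
      rw [Finset.sum_insert hsF] at h1
      simp only [Polynomial.eval_mul, Polynomial.eval_sub, Polynomial.eval_X, Polynomial.eval_C,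
        sub_self, zero_mul, ne_eq, OfNat.ofNat_ne_zero, not_false_eq_true, zero_pow, mul_zero,
        zero_add] at h1
      refine h1.trans (le_of_eq (Finset.sum_congr rfl fun x hx => ?_))
      have hxs : x ≠ s := fun h => hsF (h ▸ hx)
      have hxs' : x - s ≠ 0 := sub_ne_zero.2 hxs
      have hw : Lagrange.nodalWeight (insert s F) id x =
          (x - s)⁻¹ * Lagrange.nodalWeight F id x := by
        rw [Lagrange.nodalWeight, Lagrange.nodalWeight, Finset.erase_insert_of_ne hxs.symm,
          Finset.prod_insert (fun h => hsF (Finset.mem_of_mem_erase h))]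
        rfl
      rw [hw]
      field_simp
    have hcl : r ∈ closure (Set.Ioo (0:ℝ) 1 ∩ (↑F)ᶜ) := by
      have hd : Dense ((↑F : Set ℝ)ᶜ) := F.finite_toSet.countable.dense_compl ℝ
      have h2 := closure_minimal (hd.open_subset_closure_inter (isOpen_Ioo (a := (0:ℝ)) (b := 1)))
        isClosed_closure
      rw [closure_Ioo zero_ne_one] at h2
      exact h2 (hL r List.mem_cons_self)
    have := (isClosed_Ici.preimage hGc : IsClosed (G ⁻¹' Set.Ici 0)).closure_subset_iff.2 hGs hcl
    simpa [hG, List.map_cons, List.prod_cons] using this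

/-! ### Factorization of polynomials of constant sign off the unit interval -/

lemma eval_nonneg_of_nonneg_off_point {q : ℝ[X]} {U : Set ℝ} (hU : IsOpen U) {r : ℝ}
    (hq : ∀ x ∈ U, x ≠ r → 0 ≤ q.eval x) : ∀ x ∈ U, 0 ≤ q.eval x := by
  intro x hx
  have h1 : x ∈ closure (U ∩ {r}ᶜ) := (dense_compl_singleton r).open_subset_closure_inter hU hx
  have h2 : IsClosed ((fun x => q.eval x) ⁻¹' Set.Ici 0) := isClosed_Ici.preimage q.continuous
  exact h2.closure_subset_iff.2 (fun y hy => hq y hy.1 hy.2) h1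

/-- A root at which the polynomial has a local minimum is at least double. -/
lemma sq_dvd_of_isLocalMin {p : ℝ[X]} {r : ℝ} (hr : p.eval r = 0)
    (hmin : IsLocalMin (fun x => p.eval x) r) : ∃ q, p = (X - C r) ^ 2 * q := by
  obtain ⟨p₁, rfl⟩ := Polynomial.dvd_iff_isRoot.2 hr
  have h1 := hmin.deriv_eq_zero
  rw [Polynomial.deriv] at h1
  simp only [Polynomial.derivative_mul, Polynomial.derivative_sub, Polynomial.derivative_X,
    Polynomial.derivative_C, sub_zero, one_mul, Polynomial.eval_add, Polynomial.eval_mul,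
    Polynomial.eval_sub, Polynomial.eval_X, Polynomial.eval_C, sub_self, zero_mul, add_zero] at h1
  obtain ⟨p₂, rfl⟩ := Polynomial.dvd_iff_isRoot.2 h1
  exact ⟨p₂, by ring⟩

/-- A real polynomial that is nonnegative on `(1, ∞)` and has constant sign `(-1) ^ N` on `(-∞, 0)`
factors into linear factors with roots in `[0, 1]`, their number having the parity of `N`, and a
sum of two squares. Roots outside `[0, 1]` and non-real roots contribute quadratic factors
`(X - u)² + v²`, and sums of two squares are closed under multiplication. -/
lemma exists_factorization (d : ℕ) : ∀ (N : ℕ) (p : ℝ[X]), p.natDegree = d → p ≠ 0 →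
    (∀ x ∈ Set.Ioi (1:ℝ), 0 ≤ p.eval x) → (∀ x ∈ Set.Iio (0:ℝ), 0 ≤ ((-1) ^ N * p).eval x) →
    ∃ (L : List ℝ) (a b : ℝ[X]), (∀ r ∈ L, r ∈ Set.Icc (0:ℝ) 1) ∧ Even (N + L.length) ∧
      2 * a.natDegree + L.length ≤ d ∧ 2 * b.natDegree + L.length ≤ d ∧
      ∀ x, p.eval x = (L.map fun r => x - r).prod * (a.eval x ^ 2 + b.eval x ^ 2) := by
  induction d using Nat.strong_induction_on with
  | _ d ih =>
  intro N p hd hp h1 h0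
  rcases Nat.eq_zero_or_pos d with rfl | hdpos
  · obtain ⟨c, rfl⟩ := Polynomial.natDegree_eq_zero.1 hd
    have hc : c ≠ 0 := fun h => hp (by rw [h, C_0])
    have hcpos : 0 ≤ c := by simpa using h1 2 (by norm_num)
    have hN : Even N := by
      by_contra hN
      rw [Nat.not_even_iff_odd] at hN
      have := h0 (-1) (by norm_num)
      rw [hN.neg_one_pow] at this
      simp at this
      exact hc (le_antisymm this hcpos)
    refine ⟨[], C (√c), 0, by simp, by simpa using hN, by simp, by simp, fun x => ?_⟩
    simp [Real.sq_sqrt hcpos]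
  obtain ⟨z, hz⟩ := IsAlgClosed.exists_aeval_eq_zero ℂ p
    (fun h => by have := Polynomial.natDegree_eq_zero_iff_degree_le_zero.2 h.le; omega)
  -- splitting off a nonnegative quadratic factor
  have hquad : ∀ (u v : ℝ) (q : ℝ[X]), p = ((X - C u) ^ 2 + C (v ^ 2)) * q →
      (∀ x ∈ Set.Ioi (1:ℝ), 0 ≤ q.eval x) → (∀ x ∈ Set.Iio (0:ℝ), 0 ≤ ((-1) ^ N * q).eval x) →
      ∃ (L : List ℝ) (a b : ℝ[X]), (∀ r ∈ L, r ∈ Set.Icc (0:ℝ) 1) ∧ Even (N + L.length) ∧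
      2 * a.natDegree + L.length ≤ d ∧ 2 * b.natDegree + L.length ≤ d ∧
      ∀ x, p.eval x = (L.map fun r => x - r).prod * (a.eval x ^ 2 + b.eval x ^ 2) := by
    intro u v q hq hq1 hq0
    have hq' : q ≠ 0 := by rintro rfl; simp at hq; exact hp hq
    have hqd : ((X - C u) ^ 2 + C (v ^ 2) : ℝ[X]).natDegree = 2 := by compute_degree!
    have hQ0 : ((X - C u) ^ 2 + C (v ^ 2) : ℝ[X]) ≠ 0 := by
      intro h; rw [h] at hqd; simp at hqd
    have hdd : d = 2 + q.natDegree := by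
      rw [← hd, hq, Polynomial.natDegree_mul hQ0 hq', hqd]
    obtain ⟨L, a, b, hL, hpar, ha, hb, hfac⟩ := ih q.natDegree (by omega) N q rfl hq' hq1 hq0
    refine ⟨L, (X - C u) * a - C v * b, (X - C u) * b + C v * a, hL, hpar, ?_, ?_, fun x => ?_⟩
    · have e1 := Polynomial.natDegree_mul_le (p := X - C u) (q := a)
      have e2 := Polynomial.natDegree_C_mul_le v b
      have e3 := Polynomial.natDegree_sub_le ((X - C u) * a) (C v * b)
      rw [Polynomial.natDegree_X_sub_C] at e1
      omega
    · have e1 := Polynomial.natDegree_mul_le (p := X - C u) (q := b)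
      have e2 := Polynomial.natDegree_C_mul_le v a
      have e3 := Polynomial.natDegree_add_le ((X - C u) * b) (C v * a)
      rw [Polynomial.natDegree_X_sub_C] at e1
      omega
    · rw [hq, Polynomial.eval_mul, hfac]
      simp only [Polynomial.eval_add, Polynomial.eval_sub, Polynomial.eval_mul, Polynomial.eval_pow,
        Polynomial.eval_X, Polynomial.eval_C]
      ring
  by_cases hzim : z.im = 0
  · have hzr : p.eval z.re = 0 := by
      have : z = (z.re : ℂ) := by apply Complex.ext <;> simp [hzim]
      rw [this] at hz
      have h2 := Polynomial.aeval_algebraMap_apply ℂ z.re p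
      rw [Complex.coe_algebraMap, hz] at h2
      simpa using h2.symm
    set r := z.re with hr
    by_cases hr1 : 1 < r
    · obtain ⟨q, hq⟩ := sq_dvd_of_isLocalMin hzr (by
        filter_upwards [Ioi_mem_nhds hr1] with x hx
        rw [hzr]; exact h1 x hx)
      refine hquad r 0 q (by rw [hq]; simp) ?_ ?_
      · apply eval_nonneg_of_nonneg_off_point isOpen_Ioi (r := r)
        intro x hx hxr
        have := h1 x hx
        rw [hq] at this
        simp only [Polynomial.eval_mul, Polynomial.eval_pow, Polynomial.eval_sub, Polynomial.eval_X,
          Polynomial.eval_C] at this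
        exact nonneg_of_mul_nonneg_right this (by have := sub_ne_zero.2 hxr; positivity)
      · apply eval_nonneg_of_nonneg_off_point isOpen_Iio (r := r)
        intro x hx hxr
        have := h0 x hx
        rw [hq, mul_left_comm] at this
        rw [Polynomial.eval_mul] at this
        simp only [Polynomial.eval_pow, Polynomial.eval_sub, Polynomial.eval_X,
          Polynomial.eval_C] at this
        exact nonneg_of_mul_nonneg_right this (by have := sub_ne_zero.2 hxr; positivity)
    by_cases hr0 : r < 0
    · obtain ⟨q, hq⟩ : ∃ q, p = (X - C r) ^ 2 * q := by
        obtain ⟨q, hq⟩ := sq_dvd_of_isLocalMin (p := (-1) ^ N * p) (r := r)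
          (by rw [Polynomial.eval_mul, hzr, mul_zero]) (by
          filter_upwards [Iio_mem_nhds hr0] with x hx
          rw [show ((-1) ^ N * p).eval r = 0 by rw [Polynomial.eval_mul, hzr, mul_zero]]
          exact h0 x hx)
        refine ⟨(-1) ^ N * q, ?_⟩
        rw [mul_left_comm, ← hq, ← mul_assoc, ← mul_pow]
        simp
      refine hquad r 0 q (by rw [hq]; simp) ?_ ?_
      · apply eval_nonneg_of_nonneg_off_point isOpen_Ioi (r := r)
        intro x hx hxr
        have := h1 x hx
        rw [hq] at this
        simp only [Polynomial.eval_mul, Polynomial.eval_pow, Polynomial.eval_sub, Polynomial.eval_X,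
          Polynomial.eval_C] at this
        exact nonneg_of_mul_nonneg_right this (by have := sub_ne_zero.2 hxr; positivity)
      · apply eval_nonneg_of_nonneg_off_point isOpen_Iio (r := r)
        intro x hx hxr
        have := h0 x hx
        rw [hq, mul_left_comm] at this
        rw [Polynomial.eval_mul] at this
        simp only [Polynomial.eval_pow, Polynomial.eval_sub, Polynomial.eval_X,
          Polynomial.eval_C] at this
        exact nonneg_of_mul_nonneg_right this (by have := sub_ne_zero.2 hxr; positivity)
    -- a root in `[0, 1]` changes the sign on the negative axis
    push Not at hr1 hr0
    obtain ⟨q, hq⟩ := Polynomial.dvd_iff_isRoot.2 (show p.IsRoot r from hzr)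
    have hq' : q ≠ 0 := by rintro rfl; simp at hq; exact hp hq
    have hdd : d = 1 + q.natDegree := by
      rw [← hd, hq, Polynomial.natDegree_mul (Polynomial.X_sub_C_ne_zero r) hq',
        Polynomial.natDegree_X_sub_C]
    obtain ⟨L, a, b, hL, hpar, ha, hb, hfac⟩ := ih q.natDegree (by omega) (N + 1) q rfl hq' (by
        intro x hx
        have := h1 x hx
        rw [hq, Polynomial.eval_mul] at this
        refine nonneg_of_mul_nonneg_right this ?_
        simp only [Polynomial.eval_sub, Polynomial.eval_X, Polynomial.eval_C, sub_pos]
        exact hr1.trans_lt hx) (by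
        intro x hx
        have := h0 x hx
        rw [hq, show (-1) ^ N * ((X - C r) * q) = (C r - X) * ((-1) ^ (N + 1) * q) by ring,
          Polynomial.eval_mul] at this
        refine nonneg_of_mul_nonneg_right this ?_
        simp only [Polynomial.eval_sub, Polynomial.eval_X, Polynomial.eval_C, sub_pos]
        exact lt_of_lt_of_le hx hr0)
    refine ⟨r :: L, a, b, ?_, ?_, ?_, ?_, fun x => ?_⟩
    · intro s hs
      rcases List.mem_cons.1 hs with rfl | hs
      · exact ⟨hr0, hr1⟩
      · exact hL s hs
    · rw [List.length_cons]; convert hpar using 1; ring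
    · rw [List.length_cons]; omega
    · rw [List.length_cons]; omega
    · rw [hq, Polynomial.eval_mul, hfac, List.map_cons, List.prod_cons]
      simp only [Polynomial.eval_sub, Polynomial.eval_X, Polynomial.eval_C]
      ring
  · obtain ⟨q, hq⟩ := Polynomial.quadratic_dvd_of_aeval_eq_zero_im_ne_zero p hz hzim
    have hQ : (X ^ 2 - C (2 * z.re) * X + C (‖z‖ ^ 2) : ℝ[X]) =
        (X - C z.re) ^ 2 + C (z.im ^ 2) := by
      rw [← Complex.normSq_eq_norm_sq, Complex.normSq_apply]
      simp only [C_add, C_mul, C_pow, map_ofNat]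
      ring
    rw [hQ] at hq
    have hpos : ∀ x : ℝ, 0 < ((X - C z.re) ^ 2 + C (z.im ^ 2) : ℝ[X]).eval x := by
      intro x
      simp only [Polynomial.eval_add, Polynomial.eval_sub, Polynomial.eval_pow,
        Polynomial.eval_X, Polynomial.eval_C]
      positivity
    refine hquad z.re z.im q hq (fun x hx => ?_) (fun x hx => ?_)
    · have := h1 x hx
      rw [hq, Polynomial.eval_mul] at this
      exact nonneg_of_mul_nonneg_right this (hpos x)
    · have := h0 x hx
      rw [hq, mul_left_comm, Polynomial.eval_mul] at this
      exact nonneg_of_mul_nonneg_right this (hpos x)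

/-! ### A discrete Löwner theorem -/

/-- The case of pairwise distinct nodes. The weights are those of a divided difference of `p * f`,
where `p` is the numerator of the rational function `∑ w y / (l - y)`. -/
lemma IsOperatorMonotoneOn01.sum_mul_nonneg_of_forall_resolvent_finset {f : ℝ → ℝ}
    (hf : IsOperatorMonotoneOn01 f) (F : Finset ℝ) (hF : ∀ y ∈ F, y ∈ Set.Ioo (0:ℝ) 1)
    (w : ℝ → ℝ) (h : ∀ l : ℝ, l < 0 ∨ 1 < l → 0 ≤ ∑ y ∈ F, w y / (l - y)) :
    0 ≤ ∑ y ∈ F, w y * f y := by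
  classical
  set p : ℝ[X] := ∑ y ∈ F, C (w y) * ∏ z ∈ F.erase y, (X - C z) with hp
  have hnode : ∀ y ∈ F, Lagrange.nodalWeight F id y * p.eval y = w y := by
    intro y hy
    have h1 : p.eval y = w y * ∏ z ∈ F.erase y, (y - z) := by
      rw [hp, Polynomial.eval_finsetSum, Finset.sum_eq_single y]
      · simp [Polynomial.eval_prod]
      · intro z hz hzy
        rw [Polynomial.eval_mul, Polynomial.eval_prod,
          Finset.prod_eq_zero (Finset.mem_erase.2 ⟨hzy.symm, hy⟩) (by simp), mul_zero]
      · exact fun h => absurd hy h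
    have h2 : ∏ z ∈ F.erase y, (y - z) ≠ 0 :=
      Finset.prod_ne_zero_iff.2 fun z hz => sub_ne_zero.2 (Finset.ne_of_mem_erase hz).symm
    rw [h1, Lagrange.nodalWeight]
    simp only [id, Finset.prod_inv_distrib]
    field_simp
  have hfac : ∀ l : ℝ, l < 0 ∨ 1 < l →
      p.eval l = (∏ z ∈ F, (l - z)) * ∑ y ∈ F, w y / (l - y) := by
    intro l hl
    rw [hp, Polynomial.eval_finsetSum, Finset.mul_sum]
    refine Finset.sum_congr rfl fun y hy => ?_
    have hly : l - y ≠ 0 := by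
      have := hF y hy
      rcases hl with hl | hl
      · have := this.1; exact (by linarith : l - y < 0).ne
      · have := this.2; exact (by linarith : 0 < l - y).ne'
    rw [← Finset.mul_prod_erase F _ hy]
    simp only [Polynomial.eval_mul, Polynomial.eval_C, Polynomial.eval_prod, Polynomial.eval_sub,
      Polynomial.eval_X]
    field_simp
  by_cases hp0 : p = 0
  · refine (Finset.sum_eq_zero fun y hy => ?_).ge
    rw [← hnode y hy, hp0]; simp
  have hFne : F.Nonempty := by
    rw [Finset.nonempty_iff_ne_empty]; rintro rfl; exact hp0 (by simp [hp])
  have hdeg : p.natDegree < F.card := by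
    have : p.natDegree ≤ F.card - 1 := by
      refine Polynomial.natDegree_sum_le_of_forall_le _ _ fun y hy => ?_
      refine (Polynomial.natDegree_C_mul_le _ _).trans ?_
      rw [Polynomial.natDegree_prod_of_monic _ _ fun z _ => Polynomial.monic_X_sub_C z]
      simp [Finset.card_erase_of_mem hy]
    have := hFne.card_pos
    omega
  obtain ⟨L, a, b, hL, hpar, ha, hb, hfab⟩ := exists_factorization p.natDegree F.card p rfl hp0
    (fun l hl => by
      rw [hfac l (Or.inr hl)]
      refine mul_nonneg (Finset.prod_nonneg fun z hz => ?_) (h l (Or.inr hl))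
      have := (hF z hz).2
      have : 1 < l := hl
      linarith)
    (fun l hl => by
      have : ((-1 : ℝ[X]) ^ F.card * p).eval l = (∏ z ∈ F, (z - l)) * ∑ y ∈ F, w y / (l - y) := by
        rw [Polynomial.eval_mul, hfac l (Or.inl hl), ← mul_assoc]
        congr 1
        rw [Polynomial.eval_pow, ← Finset.prod_const, ← Finset.prod_mul_distrib]
        exact Finset.prod_congr rfl fun z _ => by simp
      rw [this]
      refine mul_nonneg (Finset.prod_nonneg fun z hz => ?_) (h l (Or.inl hl))
      have := (hF z hz).1
      have : l < 0 := hl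
      linarith)
  obtain ⟨m, hm⟩ := hpar
  have ea := hf.dividedDifference_prod m L hL F hF hm a (by omega)
  have eb := hf.dividedDifference_prod m L hL F hF hm b (by omega)
  have := add_nonneg ea eb
  rw [← Finset.sum_add_distrib] at this
  refine this.trans_eq (Finset.sum_congr rfl fun y hy => ?_)
  rw [← hnode y hy, hfab]
  ring

/-- A discrete form of **Löwner's theorem**: a linear combination of point evaluations that is
nonnegative on all `x ↦ 1 / (l - x)` with `l ∉ [0, 1]` is nonnegative on all operator monotone
functions. -/
lemma IsOperatorMonotoneOn01.sum_mul_nonneg_of_forall_resolvent {f : ℝ → ℝ}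
    (hf : IsOperatorMonotoneOn01 f) {ι : Type*} [Fintype ι] (x c : ι → ℝ)
    (hx : ∀ i, x i ∈ Set.Ioo (0:ℝ) 1)
    (h : ∀ l : ℝ, l < 0 ∨ 1 < l → 0 ≤ ∑ i, c i / (l - x i)) :
    0 ≤ ∑ i, c i * f (x i) := by
  classical
  have key : ∀ u : ℝ → ℝ, ∑ i, c i * u (x i) =
      ∑ y ∈ Finset.univ.image x, (∑ i with x i = y, c i) * u y := by
    intro u
    rw [← Finset.sum_fiberwise_of_maps_to (s := Finset.univ) (t := Finset.univ.image x) (g := x)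
      (fun i _ => Finset.mem_image_of_mem x (Finset.mem_univ i))]
    refine Finset.sum_congr rfl fun y _ => ?_
    rw [Finset.sum_mul]
    refine Finset.sum_congr rfl fun i hi => ?_
    rw [(Finset.mem_filter.1 hi).2]
  rw [key f]
  refine hf.sum_mul_nonneg_of_forall_resolvent_finset _ (fun y hy => ?_) _ fun l hl => ?_
  · obtain ⟨i, -, rfl⟩ := Finset.mem_image.1 hy
    exact hx i
  · have := key fun y => 1 / (l - y)
    simp only [mul_one_div] at this
    rw [← this]
    exact h l hl

end

/-! ### The trace inequality under compression -/

lemma Matrix.IsHermitian.cfc_eq_mul_diagonal_mul {n : ℕ} {A : Matrix (Fin n) (Fin n) ℂ}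
    (hA : A.IsHermitian) (f : ℝ → ℝ) :
    cfc f A = (hA.eigenvectorUnitary : Matrix (Fin n) (Fin n) ℂ) *
      Matrix.diagonal (fun i => (f (hA.eigenvalues i) : ℂ)) *
      star (hA.eigenvectorUnitary : Matrix (Fin n) (Fin n) ℂ) := by
  rw [hA.cfc_eq f, Matrix.IsHermitian.cfc, Unitary.conjStarAlgAut_apply]
  rfl

lemma Matrix.IsHermitian.eigenvalues_mem_spectrum {n : ℕ} {A : Matrix (Fin n) (Fin n) ℂ}
    (hA : A.IsHermitian) (i : Fin n) : hA.eigenvalues i ∈ spectrum ℝ A := by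
  rw [hA.spectrum_real_eq_range_eigenvalues]; exact ⟨i, rfl⟩

lemma Matrix.IsHermitian.forall_eigenvalues_one_sub {n : ℕ} {A : Matrix (Fin n) (Fin n) ℂ}
    (hA : A.IsHermitian) (h1A : (1 - A).IsHermitian) (p : ℝ → Prop) :
    (∀ i, p (h1A.eigenvalues i)) ↔ ∀ i, p (1 - hA.eigenvalues i) := by
  have h := spectrum.singleton_sub_eq (R := ℝ) A 1
  rw [map_one, h1A.spectrum_real_eq_range_eigenvalues, hA.spectrum_real_eq_range_eigenvalues,
    Set.singleton_sub] at h
  rw [← Set.forall_mem_range (f := h1A.eigenvalues) (p := p), ← h]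
  simp

/-- The spectrum lies in `(0,1)` exactly when `A` and `1 - A` are positive definite. -/
lemma Matrix.IsHermitian.eigenvalues_mem_Ioo_iff {n : ℕ} {A : Matrix (Fin n) (Fin n) ℂ}
    (hA : A.IsHermitian) :
    (∀ i, hA.eigenvalues i ∈ Set.Ioo (0:ℝ) 1) ↔ A.PosDef ∧ (1 - A).PosDef := by
  have h1A : (1 - A).IsHermitian := Matrix.isHermitian_one.sub hA
  rw [hA.posDef_iff_eigenvalues_pos, h1A.posDef_iff_eigenvalues_pos,
    hA.forall_eigenvalues_one_sub h1A fun x => 0 < x]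
  simp [Set.mem_Ioo, forall_and]

lemma Matrix.IsHermitian.eigenvalues_mem_Icc_iff {n : ℕ} {A : Matrix (Fin n) (Fin n) ℂ}
    (hA : A.IsHermitian) :
    (∀ i, hA.eigenvalues i ∈ Set.Icc (0:ℝ) 1) ↔ A.PosSemidef ∧ (1 - A).PosSemidef := by
  have h1A : (1 - A).IsHermitian := Matrix.isHermitian_one.sub hA
  rw [hA.posSemidef_iff_eigenvalues_nonneg, h1A.posSemidef_iff_eigenvalues_nonneg]
  simp only [Pi.le_def, Pi.zero_apply]
  rw [hA.forall_eigenvalues_one_sub h1A fun x => 0 ≤ x]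
  simp [Set.mem_Icc, forall_and]

/-- The diagonal entries of `D` in the chosen orthonormal eigenbasis of `A`. -/
noncomputable def eigenbasisDiag {n : ℕ} {A : Matrix (Fin n) (Fin n) ℂ} (hA : A.IsHermitian)
    (D : Matrix (Fin n) (Fin n) ℂ) (i : Fin n) : ℝ :=
  ((star (hA.eigenvectorUnitary : Matrix (Fin n) (Fin n) ℂ) * D *
    (hA.eigenvectorUnitary : Matrix (Fin n) (Fin n) ℂ)) i i).re

lemma trace_cfc_mul_re {n : ℕ} {A : Matrix (Fin n) (Fin n) ℂ} (hA : A.IsHermitian) (f : ℝ → ℝ)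
    (D : Matrix (Fin n) (Fin n) ℂ) :
    (Matrix.trace (cfc f A * D)).re = ∑ i, eigenbasisDiag hA D i * f (hA.eigenvalues i) := by
  rw [hA.cfc_eq_mul_diagonal_mul, mul_assoc, mul_assoc, Matrix.trace_mul_comm, mul_assoc,
    Matrix.trace, Complex.re_sum]
  refine Finset.sum_congr rfl fun i _ => ?_
  rw [Matrix.diag_apply, Matrix.diagonal_mul, Complex.re_ofReal_mul, mul_comm, eigenbasisDiag]

lemma trace_mul_re_nonneg {n : ℕ} {S T : Matrix (Fin n) (Fin n) ℂ} (hS : S.PosSemidef)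
    (hT : T.PosSemidef) : 0 ≤ (Matrix.trace (S * T)).re := by
  have h := trace_cfc_mul_re hS.1 id T
  rw [cfc_id ℝ S hS.1.isSelfAdjoint] at h
  rw [h]
  exact Finset.sum_nonneg fun i _ => by
    have h1 := hT.conjTranspose_mul_mul_same (hS.1.eigenvectorUnitary : Matrix (Fin n) (Fin n) ℂ)
    exact mul_nonneg (Complex.le_def.1 (h1.diag_nonneg (i := i))).1 (hS.eigenvalues_nonneg i)

/-- Inversion reverses the order, also in the presence of a compression: this is the
statement that both Schur complements of the block matrix with blocks `M'`, `X`, `Xᴴ`, `M⁻¹`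
are positive semidefinite simultaneously. -/
lemma posSemidef_inv_sub_conj_inv {n m : ℕ} {M : Matrix (Fin n) (Fin n) ℂ}
    {M' : Matrix (Fin m) (Fin m) ℂ} (hM : M.PosDef) (hM' : M'.PosDef)
    (X : Matrix (Fin m) (Fin n) ℂ) (h : (M' - X * M * Xᴴ).PosSemidef) :
    (M⁻¹ - Xᴴ * M'⁻¹ * X).PosSemidef := by
  have := hM.inv.isUnit.invertible
  have := hM'.isUnit.invertible
  rw [← Matrix.PosDef.fromBlocks₁₁ X _ hM', Matrix.PosDef.fromBlocks₂₂ M' X hM.inv,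
    Matrix.nonsing_inv_nonsing_inv _ ((Matrix.isUnit_iff_isUnit_det _).1 hM.isUnit)]
  exact h

lemma posSemidef_one_sub_mul_conjTranspose {n m : ℕ} {X : Matrix (Fin m) (Fin n) ℂ}
    (hX : (1 - Xᴴ * X).PosSemidef) : (1 - X * Xᴴ).PosSemidef := by
  have := posSemidef_inv_sub_conj_inv (M := (1 : Matrix (Fin m) (Fin m) ℂ))
    (M' := (1 : Matrix (Fin n) (Fin n) ℂ)) .one .one Xᴴ (by simpa using hX)
  simpa using this

/-- The function `tr (M⁻¹ D N⁻¹ D)` does not increase when `D` is replaced by `X D Xᴴ` and `M`, `N`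
by matrices above `X M Xᴴ`, `X N Xᴴ`. -/
lemma trace_inv_mul_inv_mul_le {n m : ℕ} {MA MB D : Matrix (Fin n) (Fin n) ℂ}
    {MA' MB' : Matrix (Fin m) (Fin m) ℂ} (hMA : MA.PosDef) (hMB : MB.PosDef) (hMA' : MA'.PosDef)
    (hMB' : MB'.PosDef) (hD : D.IsHermitian) (X : Matrix (Fin m) (Fin n) ℂ)
    (hA : (MA' - X * MA * Xᴴ).PosSemidef) (hB : (MB' - X * MB * Xᴴ).PosSemidef) :
    (Matrix.trace (MA'⁻¹ * (X * D * Xᴴ) * MB'⁻¹ * (X * D * Xᴴ))).re ≤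
      (Matrix.trace (MA⁻¹ * D * MB⁻¹ * D)).re := by
  have hP := posSemidef_inv_sub_conj_inv hMA hMA' X hA
  have hQ := posSemidef_inv_sub_conj_inv hMB hMB' X hB
  set P := Xᴴ * MA'⁻¹ * X
  set Q := Xᴴ * MB'⁻¹ * X
  have hPpos : P.PosSemidef := hMA'.inv.posSemidef.conjTranspose_mul_mul_same X
  have e : Matrix.trace (MA'⁻¹ * (X * D * Xᴴ) * MB'⁻¹ * (X * D * Xᴴ)) =
      Matrix.trace (P * (D * Q * D)) := by
    rw [show MA'⁻¹ * (X * D * Xᴴ) * MB'⁻¹ * (X * D * Xᴴ) =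
      (MA'⁻¹ * X * D * Xᴴ * MB'⁻¹ * X * D) * Xᴴ by simp only [Matrix.mul_assoc],
      Matrix.trace_mul_comm]
    simp only [P, Q, Matrix.mul_assoc]
  have t1 := trace_mul_re_nonneg hP (by
    simpa only [hD.eq] using hMB.inv.posSemidef.conjTranspose_mul_mul_same D)
  have t2 := trace_mul_re_nonneg hPpos (by simpa only [hD.eq] using hQ.conjTranspose_mul_mul_same D)
  have e2 : (MA⁻¹ - P) * (D * MB⁻¹ * D) + P * (D * (MB⁻¹ - Q) * D) =
      MA⁻¹ * D * MB⁻¹ * D - P * (D * Q * D) := by noncomm_ring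
  rw [e]
  have := add_nonneg t1 t2
  rw [← Complex.add_re, ← Matrix.trace_add, e2, Matrix.trace_sub, Complex.sub_re] at this
  linarith

/-- The resolvent as a functional calculus. A sign `s` is inserted on both sides so that it can be
chosen to make `s (l - A)` positive definite, whichever side of `[0, 1]` the point `l` lies on. -/
lemma cfc_resolvent {n : ℕ} {A : Matrix (Fin n) (Fin n) ℂ} (hA : A.IsHermitian) (l s : ℝ)
    (hs : s * s = 1) (hl : ∀ i, l - hA.eigenvalues i ≠ 0) :
    cfc (fun x => 1 / (l - x)) A = s • (s • (algebraMap ℝ _ l - A))⁻¹ := by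
  have hc : ∀ f : ℝ → ℝ, ContinuousOn f (spectrum ℝ A) := fun f =>
    (Matrix.finite_real_spectrum).continuousOn f
  have h1 : cfc (fun x => 1 / (l - x)) A * (algebraMap ℝ _ l - A) = 1 := by
    have : cfc (fun x : ℝ => l - x) A = algebraMap ℝ _ l - A := by
      rw [cfc_sub (fun _ => l) (fun x => x) A (hc _) (hc _), cfc_const l A, cfc_id' ℝ A]
    rw [← this, ← cfc_mul _ _ A (hc _) (hc _), ← cfc_one ℝ A]
    apply cfc_congr
    rw [hA.spectrum_real_eq_range_eigenvalues]
    rintro _ ⟨i, rfl⟩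
    simp [hl i]
  have h2 : (s • cfc (fun x => 1 / (l - x)) A) * (s • (algebraMap ℝ _ l - A)) = 1 := by
    rw [smul_mul_smul_comm, hs, h1, one_smul]
  rw [Matrix.inv_eq_left_inv h2, smul_smul, hs, one_smul]

/-- The quantity `tr ((g(A) - g(B)) (A - B))` does not increase under compression by a contraction,
for `g` operator monotone. -/
lemma IsOperatorMonotoneOn01.trace_sub_mul_sub_le {g : ℝ → ℝ} (hg : IsOperatorMonotoneOn01 g)
    {n m : ℕ} {A B : Matrix (Fin n) (Fin n) ℂ} (X : Matrix (Fin m) (Fin n) ℂ)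
    (hX : (1 - Xᴴ * X).PosSemidef) (hA : A.PosDef) (hA1 : (1 - A).PosDef) (hB : B.PosDef)
    (hB1 : (1 - B).PosDef) (hXA : (X * A * Xᴴ).PosDef) (hXA1 : (1 - X * A * Xᴴ).PosDef)
    (hXB : (X * B * Xᴴ).PosDef) (hXB1 : (1 - X * B * Xᴴ).PosDef) :
    (Matrix.trace ((cfc g (X * A * Xᴴ) - cfc g (X * B * Xᴴ)) * (X * (A - B) * Xᴴ))).re ≤
      (Matrix.trace ((cfc g A - cfc g B) * (A - B))).re := by
  have hX' := posSemidef_one_sub_mul_conjTranspose hX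
  have eA := hA.1.eigenvalues_mem_Ioo_iff.2 ⟨hA, hA1⟩
  have eB := hB.1.eigenvalues_mem_Ioo_iff.2 ⟨hB, hB1⟩
  have eA' := hXA.1.eigenvalues_mem_Ioo_iff.2 ⟨hXA, hXA1⟩
  have eB' := hXB.1.eigenvalues_mem_Ioo_iff.2 ⟨hXB, hXB1⟩
  set A' := X * A * Xᴴ with hA'
  set B' := X * B * Xᴴ with hB'
  set D := A - B with hD
  let x : (Fin n ⊕ Fin n) ⊕ (Fin m ⊕ Fin m) → ℝ := Sum.elim
    (Sum.elim hA.1.eigenvalues hB.1.eigenvalues) (Sum.elim hXA.1.eigenvalues hXB.1.eigenvalues)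
  let c : (Fin n ⊕ Fin n) ⊕ (Fin m ⊕ Fin m) → ℝ := Sum.elim
    (Sum.elim (eigenbasisDiag hA.1 D) (-eigenbasisDiag hB.1 D)) (Sum.elim (-eigenbasisDiag hXA.1 (X * D * Xᴴ))
      (eigenbasisDiag hXB.1 (X * D * Xᴴ)))
  -- the coefficients `c` and nodes `x` do not depend on the function `u`
  have key : ∀ u : ℝ → ℝ, ∑ i, c i * u (x i) = (Matrix.trace ((cfc u A - cfc u B) * D)).re -
      (Matrix.trace ((cfc u A' - cfc u B') * (X * D * Xᴴ))).re := by
    intro u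
    simp only [sub_mul, Matrix.trace_sub, Complex.sub_re, trace_cfc_mul_re hA.1,
      trace_cfc_mul_re hB.1, trace_cfc_mul_re hXA.1, trace_cfc_mul_re hXB.1, c, x,
      Fintype.sum_sum_type, Sum.elim_inl, Sum.elim_inr, Pi.neg_apply, neg_mul,
      Finset.sum_neg_distrib]
    ring
  suffices h : 0 ≤ ∑ i, c i * g (x i) by
    rw [key] at h; linarith
  refine hg.sum_mul_nonneg_of_forall_resolvent x c ?_ fun l hl => ?_
  · rintro ((i | i) | (i | i))
    exacts [eA i, eB i, eA' i, eB' i]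
  have := key fun y => 1 / (l - y)
  simp only [mul_one_div] at this
  rw [this, sub_nonneg]
  -- the sign making `s (l - A)` positive
  obtain ⟨s, hs, hsl, hpos⟩ : ∃ s : ℝ, s * s = 1 ∧ 0 ≤ s * l ∧
      ∀ {k : ℕ} {C : Matrix (Fin k) (Fin k) ℂ}, C.PosDef → (1 - C).PosDef →
        (s • (algebraMap ℝ _ l - C)).PosDef := by
    rcases hl with hl | hl
    · refine ⟨-1, by norm_num, by linarith, fun {k C} hC _ => ?_⟩
      have := hC.add (Matrix.PosDef.one.smul (neg_pos.2 hl))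
      convert this using 1
      rw [Algebra.algebraMap_eq_smul_one]; module
    · refine ⟨1, by norm_num, by linarith, fun {k C} _ hC => ?_⟩
      have := hC.add (Matrix.PosDef.one.smul (sub_pos.2 hl))
      convert this using 1
      rw [Algebra.algebraMap_eq_smul_one]; module
  have hne : ∀ {k : ℕ} {y : Fin k → ℝ}, (∀ i, y i ∈ Set.Ioo (0:ℝ) 1) → ∀ i, l - y i ≠ 0 := by
    intro k y hy i
    have := hy i
    rcases hl with hl | hl
    · have := this.1; exact (by linarith : l - y i < 0).ne
    · have := this.2; exact (by linarith : 0 < l - y i).ne'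
  have hdiff : ∀ {k : ℕ} {C E : Matrix (Fin k) (Fin k) ℂ} (hC : C.PosDef) (hC1 : (1 - C).PosDef)
      (hE : E.PosDef) (hE1 : (1 - E).PosDef) (_ : ∀ i, hC.1.eigenvalues i ∈ Set.Ioo (0:ℝ) 1)
      (_ : ∀ i, hE.1.eigenvalues i ∈ Set.Ioo (0:ℝ) 1),
      cfc (fun y => 1 / (l - y)) C - cfc (fun y => 1 / (l - y)) E =
      (s • (algebraMap ℝ _ l - C))⁻¹ * (C - E) * (s • (algebraMap ℝ _ l - E))⁻¹ := by
    intro k C E hC hC1 hE hE1 eC eE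
    rw [cfc_resolvent hC.1 l s hs (hne eC),
      cfc_resolvent hE.1 l s hs (hne eE)]
    have u1 := Matrix.nonsing_inv_mul _ ((Matrix.isUnit_iff_isUnit_det _).1 (hpos hC hC1).isUnit)
    have u2 := Matrix.mul_nonsing_inv _ ((Matrix.isUnit_iff_isUnit_det _).1 (hpos hE hE1).isUnit)
    set R := (s • (algebraMap ℝ (Matrix (Fin k) (Fin k) ℂ) l - C))⁻¹
    set S := (s • (algebraMap ℝ (Matrix (Fin k) (Fin k) ℂ) l - E))⁻¹
    have : C - E = s • (s • (algebraMap ℝ _ l - E) - s • (algebraMap ℝ _ l - C)) := by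
      rw [← smul_sub, smul_smul, hs, one_smul]; abel
    rw [this, Matrix.mul_smul, Matrix.smul_mul, mul_sub, sub_mul, u1, mul_assoc, u2, mul_one, one_mul,
      smul_sub]
  have hAB' : A' - B' = X * D * Xᴴ := by rw [hA', hB', hD, Matrix.mul_sub, Matrix.sub_mul]
  have hcomp : ∀ C : Matrix (Fin n) (Fin n) ℂ, (s • (algebraMap ℝ _ l - X * C * Xᴴ) -
      X * (s • (algebraMap ℝ _ l - C)) * Xᴴ).PosSemidef := by
    intro C
    convert hX'.smul hsl using 1
    simp only [Algebra.algebraMap_eq_smul_one, Matrix.mul_smul, Matrix.smul_mul, Matrix.mul_sub,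
      Matrix.sub_mul, Matrix.mul_one]
    module
  rw [hdiff hA hA1 hB hB1 eA eB, hdiff hXA hXA1 hXB hXB1 eA' eB', hAB']
  exact trace_inv_mul_inv_mul_le (hpos hA hA1) (hpos hB hB1) (hpos hXA hXA1) (hpos hXB hXB1)
    (hA.1.sub hB.1) X (hcomp A) (hcomp B)

/-! ### Klein's inequality -/

/-- The weights are the squared overlaps of the two eigenbases. -/
lemma exists_trace_cfc_mul_cfc {n : ℕ} {A B : Matrix (Fin n) (Fin n) ℂ} (hA : A.IsHermitian)
    (hB : B.IsHermitian) : ∃ W : Fin n → Fin n → ℝ, (∀ i j, 0 ≤ W i j) ∧ ∀ f h : ℝ → ℝ,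
      (Matrix.trace (cfc f A * cfc h B)).re =
        ∑ i, ∑ j, W i j * (f (hA.eigenvalues i) * h (hB.eigenvalues j)) := by
  set U := (hA.eigenvectorUnitary : Matrix (Fin n) (Fin n) ℂ) with hU
  set V := (hB.eigenvectorUnitary : Matrix (Fin n) (Fin n) ℂ) with hV
  refine ⟨fun i j => Complex.normSq ((star U * V) i j), fun i j => Complex.normSq_nonneg _,
    fun f h => ?_⟩
  rw [trace_cfc_mul_re hA]
  refine Finset.sum_congr rfl fun i _ => ?_
  have : star U * cfc h B * U =
      (star U * V) * Matrix.diagonal (fun j => (h (hB.eigenvalues j) : ℂ)) * (star U * V)ᴴ := by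
    rw [hB.cfc_eq_mul_diagonal_mul, Matrix.conjTranspose_mul, Matrix.star_eq_conjTranspose,
      Matrix.star_eq_conjTranspose, Matrix.conjTranspose_conjTranspose]
    simp only [Matrix.mul_assoc, ← hV]
  rw [eigenbasisDiag, ← hU, this, Matrix.mul_apply, Complex.re_sum, Finset.sum_mul]
  refine Finset.sum_congr rfl fun j _ => ?_
  rw [Matrix.mul_diagonal, Matrix.conjTranspose_apply, mul_right_comm, Complex.star_def,
    Complex.mul_conj, ← Complex.ofReal_mul, Complex.ofReal_re]
  ring

/-- **Klein's inequality**: the relative entropy is nonnegative. In the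
eigenbases it is a sum of tangent line inequalities for `φ`, with nonnegative weights. -/
lemma klein_inequality {φ g : ℝ → ℝ} (hφconv : ConvexOn ℝ (Set.Icc (0:ℝ) 1) φ)
    (hφd : ∀ x ∈ Set.Ioo (0:ℝ) 1, HasDerivAt φ (g x) x) {n : ℕ} {A B : Matrix (Fin n) (Fin n) ℂ}
    (hA : A.PosSemidef) (hA1 : (1 - A).PosSemidef) (hB : B.PosDef) (hB1 : (1 - B).PosDef) :
    (Matrix.trace (cfc g B * (A - B))).re ≤
      (Matrix.trace (cfc φ A)).re - (Matrix.trace (cfc φ B)).re := by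
  have eA := hA.1.eigenvalues_mem_Icc_iff.2 ⟨hA, hA1⟩
  have eB := hB.1.eigenvalues_mem_Ioo_iff.2 ⟨hB, hB1⟩
  have htan : ∀ a ∈ Set.Icc (0:ℝ) 1, ∀ b ∈ Set.Ioo (0:ℝ) 1, g b * (a - b) ≤ φ a - φ b := by
    intro a ha b hb
    rcases lt_trichotomy a b with hab | rfl | hab
    · have := hφconv.slope_le_of_hasDerivAt ha (Set.Ioo_subset_Icc_self hb) hab (hφd b hb)
      rw [slope_def_field, div_le_iff₀ (sub_pos.2 hab)] at this
      linarith
    · simp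
    · have := hφconv.le_slope_of_hasDerivAt (Set.Ioo_subset_Icc_self hb) ha hab (hφd b hb)
      rw [slope_def_field, le_div_iff₀ (sub_pos.2 hab)] at this
      linarith
  obtain ⟨W, hW, hWs⟩ := exists_trace_cfc_mul_cfc hA.1 hB.1
  have hcB : ∀ f : ℝ → ℝ, ContinuousOn f (spectrum ℝ B) := fun f =>
    (Matrix.finite_real_spectrum).continuousOn f
  have sA : IsSelfAdjoint A := hA.1.isSelfAdjoint
  have sB : IsSelfAdjoint B := hB.1.isSelfAdjoint
  have e1 := hWs φ 1
  have e2 := hWs 1 φ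
  have e3 := hWs id g
  have e4 := hWs 1 (g * id)
  rw [show cfc (g * id) B = cfc g B * B by
    rw [Pi.mul_def, cfc_mul g id B (hcB _) (hcB _), cfc_id ℝ B]] at e4
  simp only [cfc_one ℝ A, cfc_one ℝ B, cfc_id ℝ A, mul_one, one_mul] at e1 e2 e3 e4
  rw [mul_sub, Matrix.trace_sub, Complex.sub_re, Matrix.trace_mul_comm, e1, e2, e3, e4,
    ← sub_nonneg]
  simp only [← Finset.sum_sub_distrib, ← mul_sub]
  refine Finset.sum_nonneg fun i _ => Finset.sum_nonneg fun j _ => mul_nonneg (hW i j) ?_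
  have := htan _ (eA i) _ (eB j)
  simp only [Pi.one_apply, Pi.mul_apply, id, mul_one, one_mul]
  linarith

/-! ### Integration along a segment -/

open Filter Topology in
/-- If `ψ` and `χ` have subgradients `k` and `l` on `[0,1)` and `l - l 0 ≤ k - k 0`, then integrating
this inequality gives `χ 1 - χ 0 - l 0 ≤ ψ 1 - ψ 0 - k 0`. Instead of an integral, lower and upper
Riemann sums on `N` intervals are compared; they differ by a telescoping sum of size `O(1 / N)`. -/
lemma sub_sub_le_sub_sub_of_subgradient {ψ k χ l : ℝ → ℝ}
    (hψ : ∀ s ∈ Set.Ico (0:ℝ) 1, ∀ t ∈ Set.Icc (0:ℝ) 1, (t - s) * k s ≤ ψ t - ψ s)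
    (hχ : ∀ s ∈ Set.Ico (0:ℝ) 1, ∀ t ∈ Set.Icc (0:ℝ) 1, (t - s) * l s ≤ χ t - χ s)
    (hkl : ∀ t ∈ Set.Ico (0:ℝ) 1, l t - l 0 ≤ k t - k 0)
    (hχ1 : Tendsto χ (𝓝[<] 1) (𝓝 (χ 1))) :
    χ 1 - χ 0 - l 0 ≤ ψ 1 - ψ 0 - k 0 := by
  have h0 : (0:ℝ) ∈ Set.Ico (0:ℝ) 1 := by simp
  have step : ∀ T ∈ Set.Ico (0:ℝ) 1, χ T - χ 0 - T * l 0 ≤ ψ T - ψ 0 - T * k 0 := by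
    rintro T ⟨hT0, hT1⟩
    have hN : ∀ N : ℕ, χ T - χ 0 - T * l 0 - (ψ T - ψ 0 - T * k 0) ≤
        (T * (k T - k 0)) / ((N : ℝ) + 1) := by
      intro N
      have hN0 : (0:ℝ) < N + 1 := by positivity
      set e : ℝ := T / (N + 1) with he
      have he0 : 0 ≤ e := by positivity
      have hmem : ∀ i : ℕ, i ≤ N + 1 → i * e ∈ Set.Ico (0:ℝ) 1 := by
        intro i hi
        refine ⟨by positivity, lt_of_le_of_lt ?_ hT1⟩
        calc (i:ℝ) * e ≤ ((N : ℝ) + 1) * e := by gcongr; exact_mod_cast hi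
          _ = T := by rw [he]; field_simp
      have ind : ∀ i : ℕ, i ≤ N + 1 → χ (i * e) - χ 0 - (i * e) * l 0 -
          (ψ (i * e) - ψ 0 - (i * e) * k 0) ≤ e * (k (i * e) - k 0) := by
        intro i
        induction i with
        | zero => simp
        | succ i ih =>
          intro hi
          have m0 := hmem i (by omega)
          have m1 := hmem (i + 1) hi
          have a1 := hψ _ m0 _ (Set.Ico_subset_Icc_self m1)
          have a2 := hχ _ m1 _ (Set.Ico_subset_Icc_self m0)
          have a3 := mul_le_mul_of_nonneg_left (hkl _ m1) he0
          have a4 := ih (by omega)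
          push_cast at *
          have e1 : ((i:ℝ) + 1) * e - i * e = e := by ring
          have e2 : (i:ℝ) * e - (i + 1) * e = -e := by ring
          rw [e1] at a1
          rw [e2] at a2
          linarith
      have := ind (N + 1) le_rfl
      have eT : ((N + 1 : ℕ) : ℝ) * e = T := by rw [he]; push_cast; field_simp
      rw [eT] at this
      rw [mul_div_right_comm]
      exact this
    have hlim : Tendsto (fun N : ℕ => (T * (k T - k 0)) / ((N : ℝ) + 1)) atTop (𝓝 0) := by
      have := (tendsto_one_div_add_atTop_nhds_zero_nat (𝕜 := ℝ)).const_mul (T * (k T - k 0))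
      simpa only [mul_one_div, mul_zero] using this
    have := ge_of_tendsto' hlim hN
    linarith
  have bound : ∀ T ∈ Set.Ico (0:ℝ) 1, χ T - χ 0 - T * l 0 ≤ ψ 1 - ψ 0 - k 0 := by
    intro T hT
    have a1 := step T hT
    have a2 := hψ T hT 1 (by simp)
    have a3 := hψ 0 h0 T (Set.Ico_subset_Icc_self hT)
    have a4 := hψ T hT 0 (by simp)
    have a5 : T * k 0 ≤ T * k T := by linarith
    rcases hT.1.eq_or_lt with rfl | hT0
    · linarith
    · have a6 := le_of_mul_le_mul_left a5 hT0
      have a7 := mul_le_mul_of_nonneg_left a6 (sub_nonneg.2 hT.2.le)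
      linarith
  have hid : Tendsto (fun T : ℝ => T * l 0) (𝓝[<] 1) (𝓝 (1 * l 0)) :=
    ((continuous_id.mul continuous_const).tendsto 1).mono_left nhdsWithin_le_nhds
  rw [one_mul] at hid
  refine le_of_tendsto ((hχ1.sub_const _).sub hid) ?_
  filter_upwards [Ico_mem_nhdsLT (zero_lt_one' ℝ)] with T hT
  exact bound T hT

open Filter Topology in
open scoped Matrix.Norms.L2Operator in
lemma tendsto_trace_cfc_nhdsLT_one {φ : ℝ → ℝ} (hφ : ContinuousOn φ (Set.Icc (0:ℝ) 1)) {n : ℕ}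
    {C : ℝ → Matrix (Fin n) (Fin n) ℂ} (hC : Continuous C) (hpos : ∀ t ∈ Set.Icc (0:ℝ) 1,
      (C t).PosSemidef ∧ (1 - C t).PosSemidef) :
    Tendsto (fun t => (Matrix.trace (cfc φ (C t))).re) (𝓝[<] 1)
      (𝓝 (Matrix.trace (cfc φ (C 1))).re) := by
  have h1 : ContinuousOn (fun t => cfc φ (C t)) (Set.Icc (0:ℝ) 1) := by
    refine ContinuousOn.cfc' (s := Set.Icc (0:ℝ) 1) isCompact_Icc φ hC.continuousOn ?_ ?_ hφ
    · intro t ht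
      have e := (hpos t ht).1.1.eigenvalues_mem_Icc_iff.2 (hpos t ht)
      rw [(hpos t ht).1.1.spectrum_real_eq_range_eigenvalues]
      rintro _ ⟨i, rfl⟩
      exact e i
    · exact fun t ht => (hpos t ht).1.1.isSelfAdjoint
  have h2 : Continuous fun M : Matrix (Fin n) (Fin n) ℂ => (Matrix.trace M).re :=
    Complex.continuous_re.comp continuous_id.matrix_trace
  have h3 := (h2.comp_continuousOn h1).continuousWithinAt (x := 1) (by simp)
  refine h3.tendsto.mono_left ?_
  rw [← nhdsWithin_Ico_eq_nhdsLT (zero_lt_one' ℝ)]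
  exact nhdsWithin_mono _ Set.Ico_subset_Icc_self

/-! ### Monotonicity of the relative entropy -/

/-- Klein's inequality along a segment: `t ↦ tr (g (C t) D)` is a subgradient of
`t ↦ tr (φ (C t))`. -/
lemma klein_inequality_segment {φ g : ℝ → ℝ} (hφconv : ConvexOn ℝ (Set.Icc (0:ℝ) 1) φ)
    (hφd : ∀ x ∈ Set.Ioo (0:ℝ) 1, HasDerivAt φ (g x) x) {n : ℕ} {C : ℝ → Matrix (Fin n) (Fin n) ℂ}
    {D : Matrix (Fin n) (Fin n) ℂ} (hCD : ∀ s t, C t - C s = (t - s) • D)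
    (hC : ∀ t ∈ Set.Ico (0:ℝ) 1, (C t).PosDef ∧ (1 - C t).PosDef)
    (hC' : ∀ t ∈ Set.Icc (0:ℝ) 1, (C t).PosSemidef ∧ (1 - C t).PosSemidef) :
    ∀ s ∈ Set.Ico (0:ℝ) 1, ∀ t ∈ Set.Icc (0:ℝ) 1,
      (t - s) * (Matrix.trace (cfc g (C s) * D)).re ≤
        (Matrix.trace (cfc φ (C t))).re - (Matrix.trace (cfc φ (C s))).re := by
  intro s hs t ht
  have := klein_inequality hφconv hφd (hC' t ht).1 (hC' t ht).2 (hC s hs).1 (hC s hs).2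
  rwa [hCD, Matrix.mul_smul, Matrix.trace_smul, Complex.smul_re, smul_eq_mul] at this

lemma posDef_segment {n : ℕ} {A B : Matrix (Fin n) (Fin n) ℂ} (hA : A.PosSemidef) (hB : B.PosDef)
    {t : ℝ} (ht : t ∈ Set.Ico (0:ℝ) 1) : (B + t • (A - B)).PosDef := by
  have := (hB.smul (sub_pos.2 ht.2)).add_posSemidef (hA.smul ht.1)
  convert this using 1
  module

lemma posSemidef_segment {n : ℕ} {A B : Matrix (Fin n) (Fin n) ℂ} (hA : A.PosSemidef)
    (hB : B.PosSemidef) {t : ℝ} (ht : t ∈ Set.Icc (0:ℝ) 1) : (B + t • (A - B)).PosSemidef := by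
  have := (hB.smul (sub_nonneg.2 ht.2)).add (hA.smul ht.1)
  convert this using 1
  module

lemma one_sub_segment {n : ℕ} (A B : Matrix (Fin n) (Fin n) ℂ) (t : ℝ) :
    1 - (B + t • (A - B)) = (1 - B) + t • ((1 - A) - (1 - B)) := by module

/-- **Monotonicity of the relative entropy** (Lewin–Sabin; easy direction of Theorem 1):
if `φ` is continuous and convex on `[0,1]`, differentiable on `(0,1)` with continuous,
operator monotone derivative `φ'`, then for hermitian matrices `A, B` (eigenvalues of `A`
in `[0,1]`, of `B` in `(0,1)`) and any contraction `X` (i.e. `X*X ≤ 1`) such that the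
eigenvalues of `XAX*` lie in `[0,1]` and those of `XBX*` in `(0,1)`, one has
`H(XAX*, XBX*) ≤ H(A,B)`. -/
theorem relEntropy_monotone_of_operatorMonotone
    {n m : ℕ} (φ φ' : ℝ → ℝ)
    (hφc : ContinuousOn φ (Set.Icc (0:ℝ) 1))
    (hφconv : ConvexOn ℝ (Set.Icc (0:ℝ) 1) φ)
    (hφd : ∀ x ∈ Set.Ioo (0:ℝ) 1, HasDerivAt φ (φ' x) x)
    (hφ'c : ContinuousOn φ' (Set.Ioo (0:ℝ) 1))
    (hφ'mono : IsOperatorMonotoneOn01 φ')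
    (A B : Matrix (Fin n) (Fin n) ℂ) (hA : A.IsHermitian) (hB : B.IsHermitian)
    (hAev : ∀ i, hA.eigenvalues i ∈ Set.Icc (0:ℝ) 1)
    (hBev : ∀ i, hB.eigenvalues i ∈ Set.Ioo (0:ℝ) 1)
    (X : Matrix (Fin m) (Fin n) ℂ)
    (hX : ((1 : Matrix (Fin n) (Fin n) ℂ) - Xᴴ * X).PosSemidef)
    (hXAev : ∀ i, (Matrix.isHermitian_mul_mul_conjTranspose X hA).eigenvalues i
      ∈ Set.Icc (0:ℝ) 1)
    (hXBev : ∀ i, (Matrix.isHermitian_mul_mul_conjTranspose X hB).eigenvalues i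
      ∈ Set.Ioo (0:ℝ) 1) :
    relEntropy φ φ' (X * A * Xᴴ) (X * B * Xᴴ) ≤ relEntropy φ φ' A B := by
  obtain ⟨pA, pA1⟩ := hA.eigenvalues_mem_Icc_iff.1 hAev
  obtain ⟨pB, pB1⟩ := hB.eigenvalues_mem_Ioo_iff.1 hBev
  obtain ⟨qA, qA1⟩ := Matrix.IsHermitian.eigenvalues_mem_Icc_iff _ |>.1 hXAev
  obtain ⟨qB, qB1⟩ := Matrix.IsHermitian.eigenvalues_mem_Ioo_iff _ |>.1 hXBev
  -- the segments from `B` to `A` and from `X B Xᴴ` to `X A Xᴴ`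
  set C : ℝ → Matrix (Fin n) (Fin n) ℂ := fun t => B + t • (A - B) with hC
  have hXC : ∀ t, X * C t * Xᴴ = X * B * Xᴴ + t • (X * A * Xᴴ - X * B * Xᴴ) := by
    intro t
    simp only [hC, Matrix.mul_add, Matrix.add_mul, Matrix.mul_smul, Matrix.smul_mul,
      Matrix.mul_sub, Matrix.sub_mul]
  have hC0 : C 0 = B := by simp [hC]
  have hC1 : C 1 = A := by simp [hC]
  have hCD : ∀ s t, C t - C s = (t - s) • (A - B) := by intro s t; simp only [hC]; module
  have hXCD : ∀ s t, X * C t * Xᴴ - X * C s * Xᴴ = (t - s) • (X * (A - B) * Xᴴ) := by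
    intro s t
    rw [← Matrix.sub_mul, ← Matrix.mul_sub, hCD, Matrix.mul_smul, Matrix.smul_mul]
  have pC : ∀ t ∈ Set.Ico (0:ℝ) 1, (C t).PosDef ∧ (1 - C t).PosDef := fun t ht =>
    ⟨posDef_segment pA pB ht, by
      rw [hC, one_sub_segment]; exact posDef_segment pA1 pB1 ht⟩
  have pC' : ∀ t ∈ Set.Icc (0:ℝ) 1, (C t).PosSemidef ∧ (1 - C t).PosSemidef := fun t ht =>
    ⟨posSemidef_segment pA pB.posSemidef ht, by
      rw [hC, one_sub_segment]; exact posSemidef_segment pA1 pB1.posSemidef ht⟩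
  have qC : ∀ t ∈ Set.Ico (0:ℝ) 1, (X * C t * Xᴴ).PosDef ∧ (1 - X * C t * Xᴴ).PosDef :=
    fun t ht => by
      rw [hXC]
      exact ⟨posDef_segment qA qB ht, by rw [one_sub_segment]; exact posDef_segment qA1 qB1 ht⟩
  have qC' : ∀ t ∈ Set.Icc (0:ℝ) 1, (X * C t * Xᴴ).PosSemidef ∧ (1 - X * C t * Xᴴ).PosSemidef :=
    fun t ht => by
      rw [hXC]
      exact ⟨posSemidef_segment qA qB.posSemidef ht, by
        rw [one_sub_segment]; exact posSemidef_segment qA1 qB1.posSemidef ht⟩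
  have h0 : (0:ℝ) ∈ Set.Ico (0:ℝ) 1 := by simp
  have main := sub_sub_le_sub_sub_of_subgradient
    (klein_inequality_segment hφconv hφd hCD pC pC')
    (klein_inequality_segment hφconv hφd (C := fun t => X * C t * Xᴴ) hXCD qC qC')
    (fun t ht => by
      rcases ht.1.eq_or_lt with rfl | ht0
      · simp
      have := hφ'mono.trace_sub_mul_sub_le X hX (pC t ht).1 (pC t ht).2 (pC 0 h0).1 (pC 0 h0).2
        (qC t ht).1 (qC t ht).2 (qC 0 h0).1 (qC 0 h0).2
      rw [hCD, sub_zero, Matrix.mul_smul, Matrix.mul_smul, Matrix.smul_mul,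
        Matrix.mul_smul, Matrix.trace_smul, Matrix.trace_smul, Complex.smul_re, Complex.smul_re,
        smul_eq_mul, smul_eq_mul] at this
      have := le_of_mul_le_mul_left this ht0
      rwa [Matrix.sub_mul, Matrix.sub_mul, Matrix.trace_sub, Matrix.trace_sub, Complex.sub_re,
        Complex.sub_re] at this)
    (tendsto_trace_cfc_nhdsLT_one hφc (C := fun t => X * C t * Xᴴ) (by fun_prop) qC')
  rw [relEntropy, relEntropy, Matrix.trace_sub, Matrix.trace_sub, Matrix.trace_sub,
    Matrix.trace_sub, Complex.sub_re, Complex.sub_re, Complex.sub_re, Complex.sub_re,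
    ← Matrix.sub_mul, ← Matrix.mul_sub]
  simpa only [hC0, hC1] using main
end

section
/- Let φ: (0,1) → ℝ be continuously differentiable, and let A, B be hermitian n×n complex matrices with all eigenvalues of A in [0,1] and all eigenvalues of B in (0,1). Then for all sufficiently small α ≥ 0 the eigenvalues of B + α(A−B) lie in (0,1), and the function α ↦ tr φ(B + α(A−B)) has right derivative at α = 0 equal to tr[φ'(B)(A−B)], where φ and φ' are applied to hermitian matrices via the functional calculus (diagonalization). -/
/-!
Let `C = B + t (A - B)` have eigenvalues `μᵢ` with orthonormal eigenvectors `uᵢ`, and let `B` have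
eigenvalues `λⱼ` with eigenvectors `vⱼ`. The overlaps `wᵢⱼ = |⟨uᵢ, vⱼ⟩|²` form a doubly stochastic
matrix, and `⟨uᵢ, (C - B) vⱼ⟩ = (μᵢ - λⱼ) ⟨uᵢ, vⱼ⟩`. Hence
`tr φ(C) - tr φ(B) - tr (φ'(B) (C - B)) = ∑ᵢⱼ wᵢⱼ (φ μᵢ - φ λⱼ - φ' λⱼ (μᵢ - λⱼ))` and
`∑ᵢⱼ wᵢⱼ (μᵢ - λⱼ)² = tr ((C - B)ᴴ (C - B)) = t² S` with `S = tr ((A - B)ᴴ (A - B))`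
(`exists_overlap_weights`). No matching of individual eigenvalues of `C` with those of `B` is needed.

For `t ≤ 1/2` the spectrum of `C` stays in a compact subinterval of `(0,1)`
(`spectrum_segment_subset`). There each bracket is at most `ε |μᵢ - λⱼ| + K (μᵢ - λⱼ)²`, with `ε`
arbitrarily small and `K` depending on `ε` (`taylor_bound_on_compact`). Together with
`2 |μᵢ - λⱼ| ≤ t + (μᵢ - λⱼ)² / t`, the sum is at most `ε t (n + S) / 2 + K t² S`, which is `o(t)`.
-/

open scoped Matrix ComplexOrder

lemma trace_cfc_re {n : ℕ} {C : Matrix (Fin n) (Fin n) ℂ} (hC : C.IsHermitian) (f : ℝ → ℝ) :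
    (Matrix.trace (cfc f C)).re = ∑ i, f (hC.eigenvalues i) := by
  rw [hC.cfc_eq, Matrix.IsHermitian.cfc, Unitary.conjStarAlgAut_apply, Matrix.trace_mul_cycle,
    Unitary.coe_star_mul_self, one_mul, Matrix.trace_diagonal]
  simp

/-- The weights are `w i j = |⟨uᵢ, vⱼ⟩|²`, where `uᵢ` and `vⱼ` are the eigenbases of `C` and `B`. -/
lemma exists_overlap_weights {n : ℕ} {B C : Matrix (Fin n) (Fin n) ℂ}
    (hB : B.IsHermitian) (hC : C.IsHermitian) :
    ∃ w : Fin n → Fin n → ℝ, (∀ i j, 0 ≤ w i j) ∧ (∀ j, ∑ i, w i j = 1) ∧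
      (∀ i, ∑ j, w i j = 1) ∧
      (∑ i, ∑ j, w i j * (hC.eigenvalues i - hB.eigenvalues j) ^ 2
        = (Matrix.trace ((C - B)ᴴ * (C - B))).re) ∧
      ∀ f : ℝ → ℝ, (Matrix.trace (cfc f B * (C - B))).re
        = ∑ i, ∑ j, w i j * (f (hB.eigenvalues j) * (hC.eigenvalues i - hB.eigenvalues j)) := by
  set U : Matrix (Fin n) (Fin n) ℂ := hC.eigenvectorUnitary.1 with hU
  set V : Matrix (Fin n) (Fin n) ℂ := hB.eigenvectorUnitary.1 with hV
  have hUU : Uᴴ * U = 1 := Unitary.coe_star_mul_self hC.eigenvectorUnitary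
  have hUU' : U * Uᴴ = 1 := Unitary.coe_mul_star_self hC.eigenvectorUnitary
  have hVV : Vᴴ * V = 1 := Unitary.coe_star_mul_self hB.eigenvectorUnitary
  have hVV' : V * Vᴴ = 1 := Unitary.coe_mul_star_self hB.eigenvectorUnitary
  have hCd : C = U * Matrix.diagonal (fun i => (hC.eigenvalues i : ℂ)) * Uᴴ := hC.spectral_theorem
  have hBd : B = V * Matrix.diagonal (fun i => (hB.eigenvalues i : ℂ)) * Vᴴ := hB.spectral_theorem
  set W := Uᴴ * V with hW
  have hWW : Wᴴ * W = 1 := by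
    rw [hW, Matrix.conjTranspose_mul, Matrix.conjTranspose_conjTranspose, Matrix.mul_assoc,
      ← Matrix.mul_assoc U, hUU', one_mul, hVV]
  have hWW' : W * Wᴴ = 1 := by
    rw [hW, Matrix.conjTranspose_mul, Matrix.conjTranspose_conjTranspose, Matrix.mul_assoc,
      ← Matrix.mul_assoc V, hVV', one_mul, hUU]
  have hG : ∀ i j, (Uᴴ * (C - B) * V) i j
      = ((hC.eigenvalues i - hB.eigenvalues j : ℝ) : ℂ) * W i j := by
    have : Uᴴ * (C - B) * V = Matrix.diagonal (fun i => (hC.eigenvalues i : ℂ)) * W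
        - W * Matrix.diagonal (fun i => (hB.eigenvalues i : ℂ)) := by
      have h1 : Uᴴ * C = Matrix.diagonal (fun i => (hC.eigenvalues i : ℂ)) * Uᴴ := by
        conv_lhs => rw [hCd]
        rw [← Matrix.mul_assoc, ← Matrix.mul_assoc, hUU, one_mul]
      have h2 : B * V = V * Matrix.diagonal (fun i => (hB.eigenvalues i : ℂ)) := by
        conv_lhs => rw [hBd]
        rw [Matrix.mul_assoc, hVV, mul_one]
      rw [Matrix.mul_sub, Matrix.sub_mul, h1, Matrix.mul_assoc Uᴴ B, h2, hW]
      simp only [Matrix.mul_assoc]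
    intro i j
    rw [this]
    simp [Matrix.diagonal_mul, Matrix.mul_diagonal]
    ring
  have hns : ∀ z : ℂ, star z * z = (Complex.normSq z : ℂ) := fun z => by
    rw [Complex.normSq_eq_conj_mul_self]; rfl
  refine ⟨fun i j => Complex.normSq (W i j), fun i j => Complex.normSq_nonneg _, ?_, ?_, ?_, ?_⟩
  · intro j
    have := congrFun (congrFun hWW j) j
    simp only [Matrix.mul_apply, Matrix.conjTranspose_apply, hns, Matrix.one_apply_eq] at this
    exact_mod_cast this
  · intro i
    have := congrFun (congrFun hWW' i) i
    simp only [Matrix.mul_apply, Matrix.conjTranspose_apply, Matrix.one_apply_eq, mul_comm (W _ _),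
      hns] at this
    exact_mod_cast this
  · have h : Matrix.trace ((C - B)ᴴ * (C - B))
        = Matrix.trace ((Uᴴ * (C - B) * V)ᴴ * (Uᴴ * (C - B) * V)) := by
      rw [Matrix.conjTranspose_mul, Matrix.conjTranspose_mul, Matrix.conjTranspose_conjTranspose]
      have : Vᴴ * ((C - B)ᴴ * U) * (Uᴴ * (C - B) * V)
          = Vᴴ * ((C - B)ᴴ * (U * Uᴴ) * (C - B)) * V := by simp only [Matrix.mul_assoc]
      rw [this, hUU', mul_one, Matrix.trace_mul_cycle, hVV', one_mul]
    rw [h, Matrix.trace, Finset.sum_comm]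
    simp only [Matrix.diag_apply, Matrix.mul_apply (M := (Uᴴ * (C - B) * V)ᴴ),
      Matrix.conjTranspose_apply, hG, hns, Complex.normSq_mul, Complex.normSq_ofReal]
    simp only [← Complex.ofReal_sum, Complex.ofReal_re]
    exact Finset.sum_congr rfl fun i _ => Finset.sum_congr rfl fun j _ => by ring
  · intro f
    have h : Matrix.trace (cfc f B * (C - B))
        = Matrix.trace (Matrix.diagonal (fun i => (f (hB.eigenvalues i) : ℂ))
            * (Wᴴ * (Uᴴ * (C - B) * V))) := by
      have e : cfc f B = V * Matrix.diagonal (fun i => (f (hB.eigenvalues i) : ℂ)) * Vᴴ := by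
        rw [hB.cfc_eq, Matrix.IsHermitian.cfc, Unitary.conjStarAlgAut_apply]; rfl
      have : Wᴴ * (Uᴴ * (C - B) * V) = Vᴴ * (U * Uᴴ) * (C - B) * V := by
        rw [hW, Matrix.conjTranspose_mul, Matrix.conjTranspose_conjTranspose]
        simp only [Matrix.mul_assoc]
      rw [this, hUU', mul_one, e, Matrix.mul_assoc, Matrix.mul_assoc V, Matrix.trace_mul_comm]
      simp only [Matrix.mul_assoc]
    rw [h, Matrix.trace, Finset.sum_comm]
    simp only [Matrix.diag_apply, Matrix.diagonal_mul, Matrix.mul_apply (M := Wᴴ),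
      Matrix.conjTranspose_apply, hG, mul_left_comm (star (W _ _)), hns]
    simp only [← Complex.ofReal_sum, ← Complex.ofReal_mul, Complex.ofReal_re, Finset.mul_sum]
    exact Finset.sum_congr rfl fun i _ => Finset.sum_congr rfl fun j _ => by ring

/-- The linear term absorbs the error near `x`; away from `x` the remainder is bounded on `s`,
while `(y - x) ^ 2` is bounded below. -/
lemma taylor_bound_on_compact {φ : ℝ → ℝ} {d x : ℝ} (hx : HasDerivAt φ d x) {s : Set ℝ}
    (hs : IsCompact s) (hφ : ContinuousOn φ s) {ε : ℝ} (hε : 0 < ε) :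
    ∃ K, ∀ y ∈ s, |φ y - φ x - d * (y - x)| ≤ ε * |y - x| + K * (y - x) ^ 2 := by
  obtain ⟨T, hT⟩ := hs.exists_bound_of_continuousOn
    (f := fun y => φ y - φ x - d * (y - x)) (by fun_prop)
  have h := (hasDerivAt_iff_isLittleO.1 hx).def hε
  obtain ⟨δ, hδ, h⟩ := Metric.eventually_nhds_iff.1 h
  refine ⟨|T| / δ ^ 2, fun y hy => ?_⟩
  by_cases hyd : dist y x < δ
  · have := h hyd
    simp only [smul_eq_mul, Real.norm_eq_abs, mul_comm (y - x)] at this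
    have h0 : 0 ≤ |T| / δ ^ 2 * (y - x) ^ 2 := by positivity
    linarith
  · have h1 := hT y hy
    rw [Real.norm_eq_abs] at h1
    rw [Real.dist_eq, not_lt] at hyd
    have h2 : |T| ≤ |T| / δ ^ 2 * (y - x) ^ 2 := by
      rw [div_mul_eq_mul_div, le_div_iff₀ (by positivity), ← sq_abs (y - x)]
      gcongr
    have h3 : 0 ≤ ε * |y - x| := by positivity
    linarith [le_abs_self T]

open scoped MatrixOrder in
/-- In the Loewner order, `a ≤ B ≤ 1 - a` and `0 ≤ A ≤ 1` give
`(1 - t) a ≤ (1 - t) B + t A ≤ 1 - (1 - t) a`, and `1 - t ≥ 1/2`. -/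
lemma spectrum_segment_subset {n : ℕ} {A B : Matrix (Fin n) (Fin n) ℂ}
    (hA : A.IsHermitian) (hB : B.IsHermitian)
    (hAev : ∀ i, hA.eigenvalues i ∈ Set.Icc (0:ℝ) 1) {a : ℝ} (ha : 0 ≤ a)
    (hBev : ∀ i, hB.eigenvalues i ∈ Set.Icc a (1 - a)) {t : ℝ} (ht : t ∈ Set.Icc (0:ℝ) (1/2)) :
    spectrum ℝ (B + (t:ℂ) • (A - B)) ⊆ Set.Icc (a / 2) (1 - a / 2) := by
  have e : B + (t:ℂ) • (A - B) = (1 - t) • B + t • A := by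
    ext i j
    simp
    ring
  rw [e]
  have ht1 : 0 ≤ 1 - t := by linarith [ht.2]
  have hC : IsSelfAdjoint ((1 - t) • B + t • A) :=
    ((IsSelfAdjoint.all (1 - t)).smul hB.isSelfAdjoint).add
      ((IsSelfAdjoint.all t).smul hA.isSelfAdjoint)
  have hB1 : algebraMap ℝ _ a ≤ B := (algebraMap_le_iff_le_spectrum hB.isSelfAdjoint).2 <| by
    rw [hB.spectrum_real_eq_range_eigenvalues]; rintro _ ⟨i, rfl⟩; exact (hBev i).1
  have hB2 : B ≤ algebraMap ℝ _ (1 - a) := (le_algebraMap_iff_spectrum_le hB.isSelfAdjoint).2 <| by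
    rw [hB.spectrum_real_eq_range_eigenvalues]; rintro _ ⟨i, rfl⟩; exact (hBev i).2
  have hA1 : algebraMap ℝ _ 0 ≤ A := (algebraMap_le_iff_le_spectrum hA.isSelfAdjoint).2 <| by
    rw [hA.spectrum_real_eq_range_eigenvalues]; rintro _ ⟨i, rfl⟩; exact (hAev i).1
  have hA2 : A ≤ algebraMap ℝ _ 1 := (le_algebraMap_iff_spectrum_le hA.isSelfAdjoint).2 <| by
    rw [hA.spectrum_real_eq_range_eigenvalues]; rintro _ ⟨i, rfl⟩; exact (hAev i).2
  have h1 : algebraMap ℝ _ ((1 - t) * a) ≤ (1 - t) • B + t • A := by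
    have := add_le_add (smul_le_smul_of_nonneg_left hB1 ht1) (smul_le_smul_of_nonneg_left hA1 ht.1)
    simpa [Algebra.algebraMap_eq_smul_one, smul_smul] using this
  have h2 : (1 - t) • B + t • A ≤ algebraMap ℝ _ ((1 - t) * (1 - a) + t) := by
    have := add_le_add (smul_le_smul_of_nonneg_left hB2 ht1) (smul_le_smul_of_nonneg_left hA2 ht.1)
    simpa [Algebra.algebraMap_eq_smul_one, smul_smul, add_smul] using this
  intro x hx
  have l := (algebraMap_le_iff_le_spectrum hC).1 h1 x hx
  have r := (le_algebraMap_iff_spectrum_le hC).1 h2 x hx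
  have := ht.2
  constructor <;> nlinarith

theorem trace_cfc_hasRightDerivAt
    {n : ℕ} (φ φ' : ℝ → ℝ)
    (hφd : ∀ x ∈ Set.Ioo (0:ℝ) 1, HasDerivAt φ (φ' x) x)
    (hφ'c : ContinuousOn φ' (Set.Ioo (0:ℝ) 1))
    (A B : Matrix (Fin n) (Fin n) ℂ) (hA : A.IsHermitian) (hB : B.IsHermitian)
    (hAev : ∀ i, hA.eigenvalues i ∈ Set.Icc (0:ℝ) 1)
    (hBev : ∀ i, hB.eigenvalues i ∈ Set.Ioo (0:ℝ) 1) :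
    (∃ ε > (0:ℝ), ∀ α ∈ Set.Ico (0:ℝ) ε,
        spectrum ℝ (B + (α:ℂ) • (A - B)) ⊆ Set.Ioo (0:ℝ) 1) ∧
      HasDerivWithinAt (fun α : ℝ => (Matrix.trace (cfc φ (B + (α:ℂ) • (A - B)))).re)
        ((Matrix.trace (cfc φ' B * (A - B))).re) (Set.Ici (0:ℝ)) 0 := by
  obtain ⟨a, ha0, ha⟩ : ∃ a : ℝ, 0 < a ∧ ∀ i, hB.eigenvalues i ∈ Set.Icc a (1 - a) := by
    have h : ∀ᶠ a : ℝ in nhdsWithin 0 (Set.Ioi 0), ∀ i, hB.eigenvalues i ∈ Set.Icc a (1 - a) := by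
      refine Filter.eventually_all.2 fun i => ?_
      have := hBev i
      filter_upwards [Ioo_mem_nhdsGT (lt_min this.1 (sub_pos.2 this.2))] with a ha
      have := lt_min_iff.1 ha.2
      constructor <;> linarith
    obtain ⟨a, h1, h2⟩ := (h.and self_mem_nhdsWithin).exists
    exact ⟨a, h2, h1⟩
  have hspec := fun t (ht : t ∈ Set.Icc (0:ℝ) (1/2)) =>
    spectrum_segment_subset hA hB hAev ha0.le ha ht
  have hsub : Set.Icc (a / 2) (1 - a / 2) ⊆ Set.Ioo (0:ℝ) 1 := fun x hx =>
    ⟨by linarith [hx.1], by linarith [hx.2]⟩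
  refine ⟨⟨1/2, by norm_num, fun t ht => (hspec t ⟨ht.1, ht.2.le⟩).trans hsub⟩, ?_⟩
  have hφc : ContinuousOn φ (Set.Icc (a / 2) (1 - a / 2)) := fun x hx =>
    (hφd x (hsub hx)).continuousAt.continuousWithinAt
  set S := (Matrix.trace ((A - B)ᴴ * (A - B))).re with hS
  have hS0 : 0 ≤ S := by
    have := (Matrix.posSemidef_conjTranspose_mul_self (A - B)).trace_nonneg
    exact (Complex.le_def.1 this).1
  rw [← hasDerivWithinAt_Ioi_iff_Ici, hasDerivWithinAt_iff_isLittleO, Asymptotics.isLittleO_iff]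
  intro c hc
  obtain ⟨ε, hε, hεc⟩ : ∃ ε > 0, ε * ((n + S) / 2) ≤ c / 2 :=
    ⟨c / (n + S + 1), by positivity, by
      rw [div_mul_eq_mul_div, div_le_iff₀ (by positivity)]; nlinarith⟩
  obtain ⟨K, hK0, hK⟩ : ∃ K : ℝ, 0 ≤ K ∧ ∀ j, ∀ y ∈ Set.Icc (a / 2) (1 - a / 2),
      |φ y - φ (hB.eigenvalues j) - φ' (hB.eigenvalues j) * (y - hB.eigenvalues j)|
        ≤ ε * |y - hB.eigenvalues j| + K * (y - hB.eigenvalues j) ^ 2 := by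
    choose k hk using fun j => taylor_bound_on_compact (hφd _ (hBev j)) isCompact_Icc hφc hε
    refine ⟨∑ j, |k j|, by positivity, fun j y hy => (hk j y hy).trans ?_⟩
    gcongr
    exact (le_abs_self _).trans
      (Finset.single_le_sum (f := fun j => |k j|) (fun _ _ => abs_nonneg _) (Finset.mem_univ j))
  obtain ⟨δ, hδ, hδK⟩ : ∃ δ > 0, δ * (K * S) ≤ c / 2 :=
    ⟨c / (2 * (K * S + 1)), by positivity, by
      have : 0 ≤ K * S := by positivity
      rw [div_mul_eq_mul_div, div_le_iff₀ (by positivity)]; nlinarith⟩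
  filter_upwards [Ioo_mem_nhdsGT (show (0:ℝ) < min δ (1/2) by positivity)] with t ht
  have ht0 := ht.1
  obtain ⟨htδ, ht2⟩ := lt_min_iff.1 ht.2
  have hC : (B + (t:ℂ) • (A - B)).IsHermitian :=
    hB.add ((hA.sub hB).smul (by simp [IsSelfAdjoint]))
  have hμ : ∀ i, hC.eigenvalues i ∈ Set.Icc (a / 2) (1 - a / 2) := fun i =>
    hspec t ⟨ht0.le, ht2.le⟩ (hC.eigenvalues_mem_spectrum_real i)
  obtain ⟨w, hw0, hw1, hw2, hwS, hwf⟩ := exists_overlap_weights hB hC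
  have hd : B + (t:ℂ) • (A - B) - B = (t:ℂ) • (A - B) := by abel
  rw [hd] at hwS hwf
  have hwS' : ∑ i, ∑ j, w i j * (hC.eigenvalues i - hB.eigenvalues j) ^ 2 = t ^ 2 * S := by
    rw [hwS, hS]
    rw [Matrix.conjTranspose_smul, Matrix.smul_mul, Matrix.mul_smul, smul_smul, Matrix.trace_smul,
      Complex.star_def, Complex.conj_ofReal, ← Complex.ofReal_mul, smul_eq_mul,
      Complex.re_ofReal_mul, sq]
  have hwD : t * (Matrix.trace (cfc φ' B * (A - B))).re = ∑ i, ∑ j,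
      w i j * (φ' (hB.eigenvalues j) * (hC.eigenvalues i - hB.eigenvalues j)) := by
    rw [← hwf φ', Matrix.mul_smul, Matrix.trace_smul, smul_eq_mul, Complex.re_ofReal_mul]
  have hz : B + ((0:ℝ):ℂ) • (A - B) = B := by simp
  have hC1 : ∑ i, φ (hC.eigenvalues i) = ∑ i, ∑ j, w i j * φ (hC.eigenvalues i) := by
    simp_rw [← Finset.sum_mul, hw2, one_mul]
  have hB1 : ∑ j, φ (hB.eigenvalues j) = ∑ i, ∑ j, w i j * φ (hB.eigenvalues j) := by
    rw [Finset.sum_comm]; simp_rw [← Finset.sum_mul, hw1, one_mul]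
  rw [hz, trace_cfc_re hB, trace_cfc_re hC, sub_zero, smul_eq_mul, hwD, hC1, hB1,
    Real.norm_eq_abs, Real.norm_eq_abs, abs_of_pos ht0]
  simp only [← Finset.sum_sub_distrib, ← mul_sub]
  calc _ ≤ ∑ i, ∑ j, w i j * (ε * (t / 2)
          + (ε / (2 * t) + K) * (hC.eigenvalues i - hB.eigenvalues j) ^ 2) := by
        refine (Finset.abs_sum_le_sum_abs _ _).trans (Finset.sum_le_sum fun i _ => ?_)
        refine (Finset.abs_sum_le_sum_abs _ _).trans (Finset.sum_le_sum fun j _ => ?_)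
        rw [abs_mul, abs_of_nonneg (hw0 i j)]
        refine mul_le_mul_of_nonneg_left ((hK j _ (hμ i)).trans ?_) (hw0 i j)
        set x := hC.eigenvalues i - hB.eigenvalues j
        -- `2 t |x| ≤ t² + x²`, divided by `2 t`
        have : |x| ≤ t / 2 + x ^ 2 / (2 * t) := by
          rw [← sub_nonneg]
          have : t / 2 + x ^ 2 / (2 * t) - |x| = (t - |x|) ^ 2 / (2 * t) := by
            field_simp
            rw [← sq_abs x]
            ring
          rw [this]
          positivity
        have := mul_le_mul_of_nonneg_left this hε.le
        calc _ ≤ _ := add_le_add_left this _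
          _ = _ := by ring
    _ = n * (ε * (t / 2)) + (ε / (2 * t) + K) * (t ^ 2 * S) := by
        rw [← hwS']
        simp only [mul_add, Finset.sum_add_distrib, ← Finset.sum_mul, hw2, Finset.mul_sum]
        simp
        exact Finset.sum_congr rfl fun i _ => Finset.sum_congr rfl fun j _ => by ring
    _ = t * (ε * ((n + S) / 2)) + t * (t * (K * S)) := by
        field_simp
        ring
    _ ≤ t * (c / 2) + t * (c / 2) := by
        gcongr
        exact (mul_le_mul_of_nonneg_right htδ.le (by positivity)).trans hδK
    _ = c * t := by ring
end

section
/- Let φ: [0,1] → ℝ be continuous and differentiable on (0,1), and assume the Löwner representation hypothesis: a ∈ ℝ, b ≥ 0, and μ is a Borel probability measure on [−1,1] such that φ'(x) = a + b ∫_{[−1,1]} (2x−1)/(1−λ(2x−1)) dμ(λ) for every x ∈ (0,1). Let A, B be hermitian n×n complex matrices with all eigenvalues of A in [0,1] and all eigenvalues of B in (0,1), and set Q = A − B. Then H(A,B) = 2b ∫_{(−1,1)} ∫_0^∞ tr[ R_{λ,t}(B) Q R_{λ,t}(A) Q R_{λ,t}(B) ] dt dμ(λ). -/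
/-!
Both sides are decomposed over eigenbases of `A` and `B`. If `u i`, `v j` are eigenvectors with
eigenvalues `α i`, `β j`, then `⟨u i, (A - B) v j⟩ = (α i - β j) ⟨u i, v j⟩`. Hence, with weights
`|⟨u i, v j⟩|²`, the relative entropy is the weighted sum of the scalar Bregman divergences
`φ(α i) - φ(β j) - φ'(β j)(α i - β j)` (`trace_bregman`), and the trace of the five-fold product is
the weighted sum of `(α i - β j)² r(α i) r(β j)²` with `r` the scalar resolvent
(`trace_resolvent`). What remains is the scalar identity `scalar_representation`, for
`x ∈ [0,1]` and `y ∈ (0,1)`.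

For the scalar identity, the fundamental theorem of calculus along the segment from `y` to `x`
writes the divergence as `∫₀¹ (x - y)(φ'(y + u(x - y)) - φ'(y)) du`, and the Löwner representation
writes the integrand as the `μ`-integral of a nonnegative kernel (`loewner_increment`).
Nonnegativity yields integrability up to the endpoint `u = 1`, where `φ'` may blow up, and permits
exchanging the two integrals. For `|λ| < 1` the substitution `t = p/u - p` with
`p = 1 + λ(1 - 2y)` turns the `u`-integral into the `t`-integral
(`resolvent_integral_subst`). Finally, the endpoints `λ = ±1` carry no mass when `b > 0`
(`measure_endpoint`): the kernel with `y = 1/2` and `x` equal to `1` or `0` is then a multiple of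
`u / (1 - u)`, which is not integrable on `(0,1)`, whereas continuity of `φ` on `[0,1]` forces
integrability for `μ`-almost every `λ`.
-/

open scoped Matrix ComplexOrder
open MeasureTheory

/-- The resolvent `R_{λ,t}(C) = (1 + λ(1−2C) + t)⁻¹` of a matrix `C`. -/
noncomputable def resolventMat {n : ℕ} (l t : ℝ) (C : Matrix (Fin n) (Fin n) ℂ) :
    Matrix (Fin n) (Fin n) ℂ :=
  (1 + (l:ℂ) • (1 - 2 • C) + (t:ℂ) • 1)⁻¹

/-! ### The scalar kernel and the substitution in the resolvent integral -/

/-- The substitution `t = p/u - p` maps `(0,1)` onto `(0,∞)` and turns the resolvent integral into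
the integral of a function that is continuous on `[0,1]`; this also gives integrability. -/
lemma resolvent_integral_subst {p q : ℝ} (hp : 0 < p) (hpq : 0 < p - q) :
    IntegrableOn (fun t : ℝ => (p - q + t)⁻¹ * ((p + t)⁻¹) ^ 2) (Set.Ioi 0) ∧
    ∫ t in Set.Ioi (0:ℝ), (p - q + t)⁻¹ * ((p + t)⁻¹) ^ 2
      = ∫ u in Set.Ioo (0:ℝ) 1, u / ((p - q * u) * p) := by
  have himg : (fun u : ℝ => p / u - p) '' Set.Ioo 0 1 = Set.Ioi 0 := by
    ext t
    simp only [Set.mem_image, Set.mem_Ioo, Set.mem_Ioi]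
    constructor
    · rintro ⟨u, ⟨h0, h1⟩, rfl⟩
      rw [sub_pos, lt_div_iff₀ h0]
      nlinarith
    · intro ht
      refine ⟨p / (p + t), ⟨by positivity, ?_⟩, ?_⟩
      · rw [div_lt_one (by positivity)]; linarith
      · field_simp; ring
  have hder : ∀ u ∈ Set.Ioo (0:ℝ) 1,
      HasDerivWithinAt (fun u : ℝ => p / u - p) (-p / u ^ 2) (Set.Ioo 0 1) u := by
    intro u hu
    have h := ((hasDerivAt_const u p).div (hasDerivAt_id u) hu.1.ne').sub_const p
    simpa using h.hasDerivWithinAt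
  have hinj : Set.InjOn (fun u : ℝ => p / u - p) (Set.Ioo 0 1) := by
    intro u hu v hv h
    have h0 := hu.1.ne'
    have h1 := hv.1.ne'
    have h2 : p / u = p / v := by simpa using h
    rw [div_eq_div_iff h0 h1] at h2
    exact (mul_left_cancel₀ hp.ne' h2).symm
  have hpos : ∀ u ∈ Set.Icc (0:ℝ) 1, 0 < p - q * u := by
    intro u hu
    rcases hu.2.eq_or_lt with rfl | h1
    · simpa using hpq
    · nlinarith [mul_pos (sub_pos.2 h1) hp, mul_nonneg hu.1 hpq.le]
  have hfun : ∀ u ∈ Set.Ioo (0:ℝ) 1, |-p / u ^ 2| •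
      ((p - q + (p / u - p))⁻¹ * ((p + (p / u - p))⁻¹) ^ 2) = u / ((p - q * u) * p) := by
    intro u hu
    have h0 := hu.1
    have h1 := hpos u ⟨hu.1.le, hu.2.le⟩
    have e : p - q + (p / u - p) = (p - q * u) / u := by field_simp; ring
    rw [e, neg_div, abs_neg, abs_of_pos (by positivity), smul_eq_mul]
    have e2 : p + (p / u - p) = p / u := by ring
    rw [e2]
    field_simp
  have hcont : ContinuousOn (fun u : ℝ => u / ((p - q * u) * p)) (Set.Icc 0 1) := by
    apply ContinuousOn.div (by fun_prop) (by fun_prop)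
    intro u hu
    exact (mul_pos (hpos u hu) hp).ne'
  rw [← himg]
  constructor
  · rw [integrableOn_image_iff_integrableOn_abs_deriv_smul measurableSet_Ioo hder hinj]
    refine IntegrableOn.congr_fun (f := fun u : ℝ => u / ((p - q * u) * p)) ?_
      (fun u hu => (hfun u hu).symm) measurableSet_Ioo
    exact (hcont.integrableOn_Icc).mono_set Set.Ioo_subset_Icc_self
  · rw [integral_image_eq_integral_abs_deriv_smul measurableSet_Ioo hder hinj]
    exact setIntegral_congr_fun measurableSet_Ioo hfun

/-- With `c(s) = 1 - l(2s - 1)` and `s = y + u(x - y)`, this is `(x - y)² u / (c(s) c(y))`, i.e.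
half of `x - y` times the increment of the Löwner function `s ↦ (2s - 1) / c(s)` from `y` to `s`. -/
noncomputable def loewnerKernel (x y l u : ℝ) : ℝ :=
  (x - y) ^ 2 * (u / ((1 - l * (2 * y - 1) - 2 * l * (x - y) * u) * (1 - l * (2 * y - 1))))

lemma segment_mem_Ioo {x y u : ℝ} (hx : x ∈ Set.Icc (0:ℝ) 1) (hy : y ∈ Set.Ioo (0:ℝ) 1)
    (hu : u ∈ Set.Ico (0:ℝ) 1) : y + u * (x - y) ∈ Set.Ioo (0:ℝ) 1 := by
  obtain ⟨hx0, hx1⟩ := hx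
  obtain ⟨hy0, hy1⟩ := hy
  obtain ⟨hu0, hu1⟩ := hu
  constructor
  · nlinarith [mul_nonneg hu0 hx0, mul_pos (sub_pos.2 hu1) hy0]
  · nlinarith [mul_nonneg hu0 (sub_nonneg.2 hx1), mul_pos (sub_pos.2 hu1) (sub_pos.2 hy1)]

lemma one_sub_mul_pos {l s : ℝ} (hl : l ∈ Set.Icc (-1:ℝ) 1) (hs : s ∈ Set.Ioo (0:ℝ) 1) :
    0 < 1 - l * (2 * s - 1) := by
  obtain ⟨h1, h2⟩ := hl
  obtain ⟨h3, h4⟩ := hs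
  nlinarith [mul_nonneg (sub_nonneg.2 h2) h3.le, mul_nonneg (by linarith : 0 ≤ 1 + l) (sub_nonneg.2 h4.le)]

lemma loewnerKernel_nonneg {x y l u : ℝ} (hx : x ∈ Set.Icc (0:ℝ) 1) (hy : y ∈ Set.Ioo (0:ℝ) 1)
    (hl : l ∈ Set.Icc (-1:ℝ) 1) (hu : u ∈ Set.Ioo (0:ℝ) 1) : 0 ≤ loewnerKernel x y l u := by
  have h1 := one_sub_mul_pos hl hy
  have h2 := one_sub_mul_pos hl (segment_mem_Ioo hx hy ⟨hu.1.le, hu.2⟩)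
  have h3 : 0 < 1 - l * (2 * y - 1) - 2 * l * (x - y) * u := by linarith
  have := hu.1
  unfold loewnerKernel
  positivity

lemma continuousOn_loewner {s : ℝ} (hs : s ∈ Set.Ioo (0:ℝ) 1) :
    ContinuousOn (fun l : ℝ => (2 * s - 1) / (1 - l * (2 * s - 1))) (Set.Icc (-1) 1) := by
  apply ContinuousOn.div (by fun_prop) (by fun_prop)
  intro l hl
  exact (one_sub_mul_pos hl hs).ne'

/-! ### The scalar integral representation -/

section scalar
variable {φ φ' : ℝ → ℝ} {a b : ℝ} {μ : Measure ℝ} [IsProbabilityMeasure μ]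

/-- The increment of `φ'` along the segment from `y` to `x`, expressed by the Löwner
representation. -/
lemma loewner_increment
    (hrep : ∀ x ∈ Set.Ioo (0:ℝ) 1,
      φ' x = a + b * ∫ l in Set.Icc (-1:ℝ) 1, (2*x - 1) / (1 - l*(2*x - 1)) ∂μ)
    {x y u : ℝ} (hx : x ∈ Set.Icc (0:ℝ) 1) (hy : y ∈ Set.Ioo (0:ℝ) 1)
    (hu : u ∈ Set.Ioo (0:ℝ) 1) :
    IntegrableOn (fun l => loewnerKernel x y l u) (Set.Icc (-1) 1) μ ∧
    (x - y) * (φ' (y + u * (x - y)) - φ' y)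
      = ∫ l in Set.Icc (-1:ℝ) 1, 2 * b * loewnerKernel x y l u ∂μ := by
  have hs := segment_mem_Ioo hx hy ⟨hu.1.le, hu.2⟩
  have i1 := (continuousOn_loewner hs).integrableOn_compact (μ := μ) isCompact_Icc
  have i2 := (continuousOn_loewner hy).integrableOn_compact (μ := μ) isCompact_Icc
  have key : ∀ l ∈ Set.Icc (-1:ℝ) 1, (x - y) / 2 *
      ((2 * (y + u * (x - y)) - 1) / (1 - l * (2 * (y + u * (x - y)) - 1))
        - (2 * y - 1) / (1 - l * (2 * y - 1))) = loewnerKernel x y l u := by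
    intro l hl
    have h1 := (one_sub_mul_pos hl hs).ne'
    have h2 := (one_sub_mul_pos hl hy).ne'
    have h3 : 1 - l * (2 * y - 1) - 2 * l * (x - y) * u = 1 - l * (2 * (y + u * (x - y)) - 1) := by
      ring
    unfold loewnerKernel
    rw [h3, div_sub_div _ _ h1 h2]
    ring
  refine ⟨IntegrableOn.congr_fun ((i1.sub i2).const_mul ((x - y) / 2)) key measurableSet_Icc, ?_⟩
  rw [integral_const_mul, ← setIntegral_congr_fun measurableSet_Icc key, integral_const_mul,
    integral_sub i1 i2, hrep _ hs, hrep _ hy]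
  ring

/-- The scalar Bregman divergence as an integral along the segment from `y` to `x`. At `u = 1` the
derivative may be unbounded if `x` is `0` or `1`; the integrand is nonnegative, so continuity of `φ`
still gives integrability. -/
lemma scalar_ftc
    (hφc : ContinuousOn φ (Set.Icc (0:ℝ) 1))
    (hφd : ∀ x ∈ Set.Ioo (0:ℝ) 1, HasDerivAt φ (φ' x) x)
    (hb : 0 ≤ b)
    (hrep : ∀ x ∈ Set.Ioo (0:ℝ) 1,
      φ' x = a + b * ∫ l in Set.Icc (-1:ℝ) 1, (2*x - 1) / (1 - l*(2*x - 1)) ∂μ)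
    {x y : ℝ} (hx : x ∈ Set.Icc (0:ℝ) 1) (hy : y ∈ Set.Ioo (0:ℝ) 1) :
    IntegrableOn (fun u => ∫ l in Set.Icc (-1:ℝ) 1, 2 * b * loewnerKernel x y l u ∂μ)
      (Set.Ioo 0 1) ∧
    φ x - φ y - φ' y * (x - y) =
      ∫ u in Set.Ioo (0:ℝ) 1, ∫ l in Set.Icc (-1:ℝ) 1, 2 * b * loewnerKernel x y l u ∂μ := by
  have hc : ContinuousOn (fun u => φ (y + u * (x - y)) - φ' y * (x - y) * u) (Set.Icc 0 1) := by
    refine ContinuousOn.sub (hφc.comp (by fun_prop) ?_) (by fun_prop)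
    intro u hu
    constructor
    · nlinarith [mul_nonneg hu.1 hx.1, mul_nonneg (sub_nonneg.2 hu.2) hy.1.le]
    · nlinarith [mul_nonneg hu.1 (sub_nonneg.2 hx.2),
        mul_nonneg (sub_nonneg.2 hu.2) (sub_nonneg.2 hy.2.le)]
  have hd : ∀ u ∈ Set.Ioo (0:ℝ) 1,
      HasDerivAt (fun u => φ (y + u * (x - y)) - φ' y * (x - y) * u)
        (∫ l in Set.Icc (-1:ℝ) 1, 2 * b * loewnerKernel x y l u ∂μ) u := by
    intro u hu
    rw [← (loewner_increment hrep hx hy hu).2]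
    have hlin : HasDerivAt (fun u : ℝ => y + u * (x - y)) (x - y) u := by
      simpa using ((hasDerivAt_id u).mul_const (x - y)).const_add y
    have h1 := (hφd _ (segment_mem_Ioo hx hy ⟨hu.1.le, hu.2⟩)).comp u hlin
    have h2 : HasDerivAt (fun u : ℝ => φ' y * (x - y) * u) (φ' y * (x - y)) u := by
      simpa using (hasDerivAt_id u).const_mul (φ' y * (x - y))
    exact (h1.sub h2).congr_deriv (by ring)
  have hpos : ∀ u ∈ Set.Ioo (0:ℝ) 1,
      0 ≤ ∫ l in Set.Icc (-1:ℝ) 1, 2 * b * loewnerKernel x y l u ∂μ := fun u hu =>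
    setIntegral_nonneg measurableSet_Icc fun l hl =>
      mul_nonneg (by positivity) (loewnerKernel_nonneg hx hy hl hu)
  have hi := intervalIntegral.integrableOn_deriv_of_nonneg hc hd hpos
  refine ⟨hi.mono_set Set.Ioo_subset_Ioc_self, ?_⟩
  have := intervalIntegral.integral_eq_sub_of_hasDerivAt_of_le zero_le_one hc hd
    ((intervalIntegrable_iff_integrableOn_Ioc_of_le zero_le_one).2 hi)
  rw [intervalIntegral.integral_of_le zero_le_one, integral_Ioc_eq_integral_Ioo] at this
  rw [this]
  simp
  ring

lemma measurable_loewnerKernel (x y : ℝ) :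
    Measurable (fun z : ℝ × ℝ => loewnerKernel x y z.1 z.2) := by
  unfold loewnerKernel
  fun_prop

/-- Joint integrability of the kernel. The factor `b` is kept because for `b = 0` the kernel alone
need not be integrable. -/
lemma integrable_prod_loewnerKernel
    (hφc : ContinuousOn φ (Set.Icc (0:ℝ) 1))
    (hφd : ∀ x ∈ Set.Ioo (0:ℝ) 1, HasDerivAt φ (φ' x) x)
    (hb : 0 ≤ b)
    (hrep : ∀ x ∈ Set.Ioo (0:ℝ) 1,
      φ' x = a + b * ∫ l in Set.Icc (-1:ℝ) 1, (2*x - 1) / (1 - l*(2*x - 1)) ∂μ)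
    {x y : ℝ} (hx : x ∈ Set.Icc (0:ℝ) 1) (hy : y ∈ Set.Ioo (0:ℝ) 1) :
    Integrable (fun z : ℝ × ℝ => 2 * b * loewnerKernel x y z.1 z.2)
      ((μ.restrict (Set.Icc (-1) 1)).prod (volume.restrict (Set.Ioo 0 1))) := by
  rw [integrable_prod_iff' ((measurable_loewnerKernel x y).const_mul _).aestronglyMeasurable]
  constructor
  · filter_upwards [ae_restrict_mem measurableSet_Ioo] with u hu
    exact (loewner_increment hrep hx hy hu).1.const_mul _
  · refine IntegrableOn.congr_fun (scalar_ftc hφc hφd hb hrep hx hy).1 ?_ measurableSet_Ioo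
    intro u hu
    refine setIntegral_congr_fun measurableSet_Icc fun l hl => ?_
    exact (Real.norm_of_nonneg
      (mul_nonneg (by positivity) (loewnerKernel_nonneg hx hy hl hu))).symm

lemma not_integrableOn_endpoint {c : ℝ} (hc : c ≠ 0) :
    ¬ IntegrableOn (fun u : ℝ => c * (u / (1 - u))) (Set.Ioo 0 1) := by
  intro h
  have h1 : IntegrableOn (fun u : ℝ => u / (1 - u)) (Set.Ioo 0 1) := by
    refine (Integrable.const_mul h c⁻¹).congr (Filter.Eventually.of_forall fun u => ?_)
    simp only
    rw [← mul_assoc, inv_mul_cancel₀ hc, one_mul]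
  have h2 : IntegrableOn (fun u : ℝ => (u - 1)⁻¹) (Set.Ioo 0 1) := by
    have h3 : IntegrableOn (fun u : ℝ => -1 - u / (1 - u)) (Set.Ioo 0 1) :=
      (integrableOn_const (by simp)).sub h1
    refine h3.congr_fun (fun u hu => ?_) measurableSet_Ioo
    have h4 : 1 - u ≠ 0 := (sub_pos.2 hu.2).ne'
    have h5 : u - 1 = -(1 - u) := by ring
    simp only
    rw [h5, inv_neg]
    field_simp
    ring
  rw [← integrableOn_Ioc_iff_integrableOn_Ioo,
    ← intervalIntegrable_iff_integrableOn_Ioc_of_le zero_le_one,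
    intervalIntegrable_sub_inv_iff] at h2
  simp at h2

/-- When `b > 0`, an atom of `μ` at `±1` would make `φ'` non-integrable at an endpoint of `[0,1]`,
contradicting the continuity of `φ` there. -/
lemma measure_endpoint
    (hφc : ContinuousOn φ (Set.Icc (0:ℝ) 1))
    (hφd : ∀ x ∈ Set.Ioo (0:ℝ) 1, HasDerivAt φ (φ' x) x)
    (hb : 0 < b)
    (hrep : ∀ x ∈ Set.Ioo (0:ℝ) 1,
      φ' x = a + b * ∫ l in Set.Icc (-1:ℝ) 1, (2*x - 1) / (1 - l*(2*x - 1)) ∂μ)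
    {l : ℝ} (hl : l = 1 ∨ l = -1) : μ {l} = 0 := by
  have hlI : l ∈ Set.Icc (-1:ℝ) 1 := by rcases hl with rfl | rfl <;> norm_num
  have hl2 : l * l = 1 := by rcases hl with rfl | rfl <;> norm_num
  -- `x = (1 + l) / 2` is the endpoint `1` for `l = 1` and `0` for `l = -1`; with `y = 1 / 2` the
  -- kernel at this `l` is `(1 / 4) * (u / (1 - u))`.
  have hx : (1 + l) / 2 ∈ Set.Icc (0:ℝ) 1 := by rcases hl with rfl | rfl <;> norm_num
  have hy : (1 / 2 : ℝ) ∈ Set.Ioo (0:ℝ) 1 := by norm_num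
  have h := (integrable_prod_loewnerKernel hφc hφd hb.le hrep hx hy).prod_right_ae
  rw [ae_restrict_iff' measurableSet_Icc] at h
  refine measure_mono_null (Set.singleton_subset_iff.2 ?_) h
  intro h'
  refine not_integrableOn_endpoint (c := 2 * b * (1 / 4)) (by positivity) ?_
  refine (h' hlI).congr (Filter.Eventually.of_forall fun u => ?_)
  simp only [loewnerKernel]
  have e1 : ((1 + l) / 2 - 1 / 2) ^ 2 = 1 / 4 := by linear_combination (1 / 4) * hl2
  have e2 : (1 - l * (2 * (1 / 2) - 1) - 2 * l * ((1 + l) / 2 - 1 / 2) * u) = 1 - u := by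
    linear_combination (-u) * hl2
  rw [e1, e2]
  norm_num
  ring

/-- The `t`-integral of scalar resolvents equals the `u`-integral of the kernel. -/
lemma resolvent_kernel_eq {x y l : ℝ} (hx : x ∈ Set.Icc (0:ℝ) 1) (hy : y ∈ Set.Ioo (0:ℝ) 1)
    (hl : l ∈ Set.Ioo (-1:ℝ) 1) :
    IntegrableOn (fun t : ℝ => (x - y) ^ 2 * (1 + l * (1 - 2 * x) + t)⁻¹
        * ((1 + l * (1 - 2 * y) + t)⁻¹) ^ 2) (Set.Ioi 0) ∧
    ∫ t in Set.Ioi (0:ℝ), (x - y) ^ 2 * (1 + l * (1 - 2 * x) + t)⁻¹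
        * ((1 + l * (1 - 2 * y) + t)⁻¹) ^ 2
      = ∫ u in Set.Ioo (0:ℝ) 1, loewnerKernel x y l u := by
  have hp := one_sub_mul_pos (Set.Ioo_subset_Icc_self hl) hy
  have hq : 0 < 1 - l * (2 * y - 1) - 2 * l * (x - y) := by
    nlinarith [hl.1, hl.2, hx.1, hx.2, mul_nonneg (sub_nonneg.2 hl.2.le) hx.1,
      mul_nonneg (by linarith [hl.1] : 0 ≤ 1 + l) (sub_nonneg.2 hx.2)]
  obtain ⟨h1, h2⟩ := resolvent_integral_subst hp hq
  have e : (fun t : ℝ => (x - y) ^ 2 * (1 + l * (1 - 2 * x) + t)⁻¹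
        * ((1 + l * (1 - 2 * y) + t)⁻¹) ^ 2) = fun t : ℝ => (x - y) ^ 2 *
        ((1 - l * (2 * y - 1) - 2 * l * (x - y) + t)⁻¹ * ((1 - l * (2 * y - 1) + t)⁻¹) ^ 2) := by
    ext t
    rw [mul_assoc]
    congr 4 <;> ring
  rw [e]
  refine ⟨h1.const_mul _, ?_⟩
  rw [integral_const_mul, h2, ← integral_const_mul]
  rfl

/-- The integral representation for scalars, i.e. for `1 × 1` matrices. -/
lemma scalar_representation
    (hφc : ContinuousOn φ (Set.Icc (0:ℝ) 1))
    (hφd : ∀ x ∈ Set.Ioo (0:ℝ) 1, HasDerivAt φ (φ' x) x)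
    (hb : 0 ≤ b)
    (hrep : ∀ x ∈ Set.Ioo (0:ℝ) 1,
      φ' x = a + b * ∫ l in Set.Icc (-1:ℝ) 1, (2*x - 1) / (1 - l*(2*x - 1)) ∂μ)
    {x y : ℝ} (hx : x ∈ Set.Icc (0:ℝ) 1) (hy : y ∈ Set.Ioo (0:ℝ) 1) :
    IntegrableOn (fun l => 2 * b * ∫ t in Set.Ioi (0:ℝ),
        (x - y) ^ 2 * (1 + l * (1 - 2 * x) + t)⁻¹ * ((1 + l * (1 - 2 * y) + t)⁻¹) ^ 2)
      (Set.Ioo (-1) 1) μ ∧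
    φ x - φ y - φ' y * (x - y) =
      ∫ l in Set.Ioo (-1:ℝ) 1, 2 * b * (∫ t in Set.Ioi (0:ℝ),
        (x - y) ^ 2 * (1 + l * (1 - 2 * x) + t)⁻¹ * ((1 + l * (1 - 2 * y) + t)⁻¹) ^ 2) ∂μ := by
  have hprod := integrable_prod_loewnerKernel hφc hφd hb hrep hx hy
  have hcongr : ∀ l ∈ Set.Ioo (-1:ℝ) 1, ∫ u in Set.Ioo (0:ℝ) 1, 2 * b * loewnerKernel x y l u
      = 2 * b * (∫ t in Set.Ioi (0:ℝ),
        (x - y) ^ 2 * (1 + l * (1 - 2 * x) + t)⁻¹ * ((1 + l * (1 - 2 * y) + t)⁻¹) ^ 2) := by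
    intro l hl
    rw [(resolvent_kernel_eq hx hy hl).2, integral_const_mul]
  constructor
  · have h : IntegrableOn (fun l => ∫ u in Set.Ioo (0:ℝ) 1, 2 * b * loewnerKernel x y l u)
        (Set.Icc (-1) 1) μ := hprod.integral_prod_left
    exact (h.mono_set Set.Ioo_subset_Icc_self).congr_fun hcongr measurableSet_Ioo
  · rw [(scalar_ftc hφc hφd hb hrep hx hy).2, ← setIntegral_congr_fun measurableSet_Ioo hcongr,
      ← integral_integral_swap hprod]
    rcases hb.eq_or_lt with rfl | hb
    · simp
    refine setIntegral_congr_set ?_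
    have h1 := measure_endpoint hφc hφd hb hrep (Or.inl rfl)
    have h2 := measure_endpoint hφc hφd hb hrep (Or.inr rfl)
    exact (Ioo_ae_eq_Icc' h2 h1).symm

end scalar

/-! ### Reduction of traces to sums over pairs of eigenvalues -/

/-- The matrix `U diag(d) U*`, with real entries `d` and `U` unitary: the hermitian matrix with
eigenvalues `d` and the columns of `U` as eigenvectors. -/
noncomputable def diagConj {n : ℕ} (U : Matrix.unitaryGroup (Fin n) ℂ) (d : Fin n → ℝ) :
    Matrix (Fin n) (Fin n) ℂ :=
  (U : Matrix (Fin n) (Fin n) ℂ) * Matrix.diagonal (fun i => (d i : ℂ))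
    * star (U : Matrix (Fin n) (Fin n) ℂ)

section diagConj
variable {n : ℕ} (U V : Matrix.unitaryGroup (Fin n) ℂ)

lemma diagConj_mul (d e : Fin n → ℝ) :
    diagConj U d * diagConj U e = diagConj U (fun i => d i * e i) := by
  have h : star (U : Matrix (Fin n) (Fin n) ℂ) * (U : Matrix (Fin n) (Fin n) ℂ) = 1 :=
    Unitary.coe_star_mul_self U
  have h2 : Matrix.diagonal (fun i => ((d i * e i : ℝ) : ℂ))
      = Matrix.diagonal (fun i => (d i : ℂ)) * Matrix.diagonal (fun i => (e i : ℂ)) := by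
    simp [Matrix.diagonal_mul_diagonal]
  unfold diagConj
  rw [h2]
  calc _ = (U : Matrix (Fin n) (Fin n) ℂ) * Matrix.diagonal (fun i => (d i : ℂ))
    * (star (U : Matrix (Fin n) (Fin n) ℂ) * (U : Matrix (Fin n) (Fin n) ℂ))
      * Matrix.diagonal (fun i => (e i : ℂ)) * star (U : Matrix (Fin n) (Fin n) ℂ) := by
        simp only [Matrix.mul_assoc]
    _ = _ := by rw [h]; simp only [Matrix.mul_assoc, Matrix.mul_one]

lemma diagConj_one : diagConj U (fun _ => 1) = 1 := by
  simp [diagConj]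

lemma diagConj_add (d e : Fin n → ℝ) :
    diagConj U d + diagConj U e = diagConj U (fun i => d i + e i) := by
  simp only [diagConj, ← Matrix.add_mul, ← Matrix.mul_add, Matrix.diagonal_add]
  simp

lemma diagConj_smul (c : ℝ) (d : Fin n → ℝ) :
    (c : ℂ) • diagConj U d = diagConj U (fun i => c * d i) := by
  have h : Matrix.diagonal (fun i => ((c * d i : ℝ) : ℂ))
      = (c : ℂ) • Matrix.diagonal (fun i => (d i : ℂ)) := by
    rw [← Matrix.diagonal_smul]
    congr 1
    ext i
    simp
  simp only [diagConj, h, Matrix.smul_mul, Matrix.mul_smul]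

lemma resolventMat_diagConj (l t : ℝ) (d : Fin n → ℝ)
    (h : ∀ i, 1 + l * (1 - 2 * d i) + t ≠ 0) :
    resolventMat l t (diagConj U d) = diagConj U (fun i => (1 + l * (1 - 2 * d i) + t)⁻¹) := by
  unfold resolventMat
  have e : (1 + (l:ℂ) • (1 - 2 • diagConj U d) + (t:ℂ) • 1)
      = diagConj U (fun i => 1 + l * (1 - 2 * d i) + t) := by
    have h2 : (1 : Matrix (Fin n) (Fin n) ℂ) - 2 • diagConj U d
        = diagConj U (fun _ => 1) + ((-2 : ℝ) : ℂ) • diagConj U d := by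
      rw [diagConj_one, sub_eq_add_neg]
      congr 1
      push_cast
      rw [neg_smul]
      congr 1
      rw [two_smul, two_smul]
    rw [h2, ← diagConj_one U]
    simp only [diagConj_smul, diagConj_add]
    congr 1
    ext i
    ring
  rw [e]
  apply Matrix.inv_eq_right_inv
  rw [diagConj_mul, ← diagConj_one U]
  congr 1
  ext i
  exact mul_inv_cancel₀ (h i)

/-- In terms of the eigenbases, the trace of a product is a sum weighted by the squared overlaps
`|⟨u i, v j⟩|²`, the entries of `U* V` being the inner products of the basis vectors. -/
lemma trace_diagConj_mul (d e : Fin n → ℝ) :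
    (Matrix.trace (diagConj U d * diagConj V e)).re
      = ∑ i, ∑ j, Complex.normSq ((star (U : Matrix (Fin n) (Fin n) ℂ) * V) i j)
          * (d i * e j) := by
  set W := star (U : Matrix (Fin n) (Fin n) ℂ) * (V : Matrix (Fin n) (Fin n) ℂ) with hW
  have hW' : star (V : Matrix (Fin n) (Fin n) ℂ) * (U : Matrix (Fin n) (Fin n) ℂ) = Wᴴ := by
    rw [hW, Matrix.conjTranspose_mul]
    simp [Matrix.star_eq_conjTranspose]
  have : Matrix.trace (diagConj U d * diagConj V e)
      = Matrix.trace (Matrix.diagonal (fun i => (d i : ℂ)) * W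
          * (Matrix.diagonal (fun i => (e i : ℂ)) * Wᴴ)) := by
    unfold diagConj
    rw [← hW', hW]
    simp only [Matrix.mul_assoc]
    rw [Matrix.trace_mul_comm]
    simp only [Matrix.mul_assoc]
  rw [this, Matrix.trace, Complex.re_sum]
  refine Finset.sum_congr rfl fun i _ => ?_
  rw [Matrix.diag_apply, Matrix.mul_apply, Complex.re_sum]
  refine Finset.sum_congr rfl fun j _ => ?_
  rw [Matrix.diagonal_mul, Matrix.diagonal_mul, Matrix.conjTranspose_apply]
  simp only [Complex.normSq_apply, Complex.mul_re, Complex.mul_im, Complex.ofReal_re,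
    Complex.ofReal_im, Complex.star_def, Complex.conj_re, Complex.conj_im]
  ring

/-- The matrix Bregman expression is the overlap-weighted sum of its scalar counterparts. -/
lemma trace_bregman (d e : Fin n → ℝ) (F G H : Fin n → ℝ) :
    (Matrix.trace (diagConj U F - diagConj V G
        - diagConj V H * (diagConj U d - diagConj V e))).re
      = ∑ i, ∑ j, Complex.normSq ((star (U : Matrix (Fin n) (Fin n) ℂ) * V) i j)
          * (F i - G j - H j * (d i - e j)) := by
  have e1 : diagConj U F - diagConj V G - diagConj V H * (diagConj U d - diagConj V e)
      = diagConj U F * diagConj V (fun _ => 1) - diagConj U (fun _ => 1) * diagConj V G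
        - diagConj V H * diagConj U d + diagConj U (fun _ => 1) *
          diagConj V (fun j => H j * e j) := by
    rw [← diagConj_mul, diagConj_one, diagConj_one]
    noncomm_ring
  rw [e1, Matrix.trace_add, Matrix.trace_sub, Matrix.trace_sub,
    Matrix.trace_mul_comm (diagConj V H)]
  simp only [Complex.add_re, Complex.sub_re, trace_diagConj_mul, ← Finset.sum_sub_distrib,
    ← Finset.sum_add_distrib]
  refine Finset.sum_congr rfl fun i _ => Finset.sum_congr rfl fun j _ => ?_
  ring

/-- Each factor `A - B` sandwiched between the eigenbases contributes a scalar `d i - e j`, so the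
five-fold product reduces to an overlap-weighted sum of scalars. -/
lemma trace_resolvent (d e : Fin n → ℝ) (f g : Fin n → ℝ) :
    (Matrix.trace (diagConj V g * (diagConj U d - diagConj V e) * diagConj U f
        * (diagConj U d - diagConj V e) * diagConj V g)).re
      = ∑ i, ∑ j, Complex.normSq ((star (U : Matrix (Fin n) (Fin n) ℂ) * V) i j)
          * ((d i - e j) ^ 2 * f i * g j ^ 2) := by
  have e1 : (Matrix.trace (diagConj V g * (diagConj U d - diagConj V e) * diagConj U f
        * (diagConj U d - diagConj V e) * diagConj V g)).re
      = (Matrix.trace ((diagConj U d * diagConj U f * diagConj U d)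
            * (diagConj V g * diagConj V g))).re
        - (Matrix.trace ((diagConj U d * diagConj U f)
            * (diagConj V e * diagConj V g * diagConj V g))).re
        - (Matrix.trace ((diagConj U f * diagConj U d)
            * (diagConj V g * diagConj V g * diagConj V e))).re
        + (Matrix.trace (diagConj U f
            * (diagConj V e * diagConj V g * diagConj V g * diagConj V e))).re := by
    generalize diagConj U d = A
    generalize diagConj U f = R
    generalize diagConj V e = B
    generalize diagConj V g = S
    have h1 : Matrix.trace (S * (A - B) * R * (A - B) * S)
        = Matrix.trace ((A - B) * R * (A - B) * (S * S)) := by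
      rw [Matrix.trace_mul_comm, ← Matrix.trace_mul_comm (S * S)]
      simp only [Matrix.mul_assoc]
    have h2 : (A - B) * R * (A - B) * (S * S)
        = (A * R * A) * (S * S) - (A * R) * (B * S * S) - B * (R * A * (S * S))
          + B * (R * (B * S * S)) := by
      noncomm_ring
    rw [h1, h2, Matrix.trace_add, Matrix.trace_sub, Matrix.trace_sub, Matrix.trace_mul_comm B,
      Matrix.trace_mul_comm B]
    simp only [Complex.add_re, Complex.sub_re, Matrix.mul_assoc]
  rw [e1]
  simp only [diagConj_mul, trace_diagConj_mul, ← Finset.sum_sub_distrib,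
    ← Finset.sum_add_distrib]
  refine Finset.sum_congr rfl fun i _ => Finset.sum_congr rfl fun j _ => ?_
  ring

end diagConj

lemma cfc_eq_diagConj {n : ℕ} {A : Matrix (Fin n) (Fin n) ℂ} (hA : A.IsHermitian) (f : ℝ → ℝ) :
    cfc f A = diagConj hA.eigenvectorUnitary (fun i => f (hA.eigenvalues i)) := by
  rw [hA.cfc_eq]
  rfl

lemma eq_diagConj {n : ℕ} {A : Matrix (Fin n) (Fin n) ℂ} (hA : A.IsHermitian) :
    A = diagConj hA.eigenvectorUnitary hA.eigenvalues := by
  conv_lhs => rw [hA.spectral_theorem]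
  rfl

/-- **Integral representation of the relative entropy** (matrix version of Lemma 1):
under the Löwner representation hypothesis for `φ'`,
`H(A,B) = 2b ∫_{(−1,1)} ∫_0^∞ tr[R_{λ,t}(B) Q R_{λ,t}(A) Q R_{λ,t}(B)] dt dμ(λ)`
where `Q = A − B`. -/
theorem relEntropy_eq_double_integral
    {n : ℕ} (φ φ' : ℝ → ℝ) (a b : ℝ) (μ : Measure ℝ) [IsProbabilityMeasure μ]
    (hφc : ContinuousOn φ (Set.Icc (0:ℝ) 1))
    (hφd : ∀ x ∈ Set.Ioo (0:ℝ) 1, HasDerivAt φ (φ' x) x)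
    (hb : 0 ≤ b)
    (hμsupp : μ (Set.Icc (-1:ℝ) 1)ᶜ = 0)
    (hrep : ∀ x ∈ Set.Ioo (0:ℝ) 1,
      φ' x = a + b * ∫ l in Set.Icc (-1:ℝ) 1, (2*x - 1) / (1 - l*(2*x - 1)) ∂μ)
    (A B : Matrix (Fin n) (Fin n) ℂ) (hA : A.IsHermitian) (hB : B.IsHermitian)
    (hAev : ∀ i, hA.eigenvalues i ∈ Set.Icc (0:ℝ) 1)
    (hBev : ∀ i, hB.eigenvalues i ∈ Set.Ioo (0:ℝ) 1) :
    (Matrix.trace (cfc φ A - cfc φ B - cfc φ' B * (A - B))).re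
      = 2 * b * ∫ l in Set.Ioo (-1:ℝ) 1,
          (∫ t in Set.Ioi (0:ℝ),
            (Matrix.trace (resolventMat l t B * (A - B) * resolventMat l t A
              * (A - B) * resolventMat l t B)).re) ∂μ := by
  set U := hA.eigenvectorUnitary
  set V := hB.eigenvectorUnitary
  set d := hA.eigenvalues
  set e := hB.eigenvalues
  set w : Fin n → Fin n → ℝ := fun i j =>
    Complex.normSq ((star (U : Matrix (Fin n) (Fin n) ℂ) * V) i j) with hw
  set J : ℝ → ℝ → ℝ → ℝ := fun x y l => ∫ t in Set.Ioi (0:ℝ),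
    (x - y) ^ 2 * (1 + l * (1 - 2 * x) + t)⁻¹ * ((1 + l * (1 - 2 * y) + t)⁻¹) ^ 2 with hJ
  have hscal := fun i j => scalar_representation hφc hφd hb hrep (hAev i) (hBev j)
  have hAd : A = diagConj U d := eq_diagConj hA
  have hBe : B = diagConj V e := eq_diagConj hB
  have hL : (Matrix.trace (cfc φ A - cfc φ B - cfc φ' B * (A - B))).re
      = ∑ i, ∑ j, w i j * (φ (d i) - φ (e j) - φ' (e j) * (d i - e j)) := by
    rw [cfc_eq_diagConj hA, cfc_eq_diagConj hB, cfc_eq_diagConj hB,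
      ← trace_bregman U V d e, ← hAd, ← hBe]
  have hpos : ∀ l ∈ Set.Ioo (-1:ℝ) 1, ∀ t ∈ Set.Ioi (0:ℝ), ∀ x ∈ Set.Icc (0:ℝ) 1,
      1 + l * (1 - 2 * x) + t ≠ 0 := by
    intro l hl t ht x hx
    have ht' : 0 < t := ht
    nlinarith [hl.1, hl.2, mul_nonneg (sub_nonneg.2 hl.2.le) hx.1,
      mul_nonneg (by linarith [hl.1] : 0 ≤ 1 + l) (sub_nonneg.2 hx.2)]
  have hR : ∀ l ∈ Set.Ioo (-1:ℝ) 1, (∫ t in Set.Ioi (0:ℝ),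
        (Matrix.trace (resolventMat l t B * (A - B) * resolventMat l t A
          * (A - B) * resolventMat l t B)).re) = ∑ i, ∑ j, w i j * J (d i) (e j) l := by
    intro l hl
    have h1 : ∀ t ∈ Set.Ioi (0:ℝ), (Matrix.trace (resolventMat l t B * (A - B)
          * resolventMat l t A * (A - B) * resolventMat l t B)).re
        = ∑ i, ∑ j, w i j * ((d i - e j) ^ 2 * (1 + l * (1 - 2 * d i) + t)⁻¹
            * ((1 + l * (1 - 2 * e j) + t)⁻¹) ^ 2) := by
      intro t ht
      rw [hAd, hBe, resolventMat_diagConj U l t d fun i => hpos l hl t ht _ (hAev i),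
        resolventMat_diagConj V l t e
          fun i => hpos l hl t ht _ (Set.Ioo_subset_Icc_self (hBev i)),
        trace_resolvent]
    have hint := fun i j => ((resolvent_kernel_eq (hAev i) (hBev j) hl).1).const_mul (w i j)
    rw [setIntegral_congr_fun measurableSet_Ioi h1,
      integral_finsetSum _ fun i _ => integrable_finsetSum _ fun j _ => hint i j]
    refine Finset.sum_congr rfl fun i _ => ?_
    rw [integral_finsetSum _ fun j _ => hint i j]
    exact Finset.sum_congr rfl fun j _ => integral_const_mul _ _
  have hint := fun i j => (hscal i j).1.const_mul (w i j)
  rw [hL, ← integral_const_mul]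
  have hR' : ∀ l ∈ Set.Ioo (-1:ℝ) 1, 2 * b * (∫ t in Set.Ioi (0:ℝ),
        (Matrix.trace (resolventMat l t B * (A - B) * resolventMat l t A
          * (A - B) * resolventMat l t B)).re)
      = ∑ i, ∑ j, w i j * (2 * b * J (d i) (e j) l) := by
    intro l hl
    rw [hR l hl, Finset.mul_sum]
    refine Finset.sum_congr rfl fun i _ => ?_
    rw [Finset.mul_sum]
    exact Finset.sum_congr rfl fun j _ => by ring
  rw [setIntegral_congr_fun measurableSet_Ioo hR',
    integral_finsetSum _ fun i _ => integrable_finsetSum _ fun j _ => hint i j]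
  refine Finset.sum_congr rfl fun i _ => ?_
  rw [integral_finsetSum _ fun j _ => hint i j]
  refine Finset.sum_congr rfl fun j _ => ?_
  rw [(hscal i j).2]
  exact (integral_const_mul _ _).symm
end

section
/- Let φ: [0,1] → ℝ be continuous and differentiable on (0,1), and assume the Löwner representation hypothesis with b > 0: a ∈ ℝ and μ is a Borel probability measure on [−1,1] such that φ'(x) = a + b ∫_{[−1,1]} (2x−1)/(1−λ(2x−1)) dμ(λ) for every x ∈ (0,1). Then μ({−1}) = 0 and μ({1}) = 0. -/
/-!
Put `t = 2x - 1`. An atom of mass `m` at `1` makes the (nonnegative) integrand contribute at least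
`m t / (1 - t) = m (1 / (2 (1 - x)) - 1)` to the integral when `t ∈ (0, 1)`
(`atom_mul_le_integral`). So `φ'` is bounded below near `1` by a multiple of the non-integrable
function `1 / (1 - x)`, which would force `φ` to blow up logarithmically at `1`, contradicting its
boundedness on `[0, 1]` (`coeff_nonpos_of_deriv_ge`). The endpoint `-1` follows in the same way from
the reflected function `x ↦ φ (1 - x)`.
-/

open MeasureTheory

/-- If the derivative of a function continuous on `[0, 1]` is at least `c + k / (1 - x)` near `1`,
then `k ≤ 0`, since otherwise the function would grow like `-k log (1 - x)`. -/
lemma coeff_nonpos_of_deriv_ge {f f' : ℝ → ℝ} {c k : ℝ}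
    (hfc : ContinuousOn f (Set.Icc (0:ℝ) 1))
    (hfd : ∀ x ∈ Set.Ioo (0:ℝ) 1, HasDerivAt f (f' x) x)
    (hge : ∀ x ∈ Set.Ioo (1/2:ℝ) 1, c + k * (1 / (1 - x)) ≤ f' x) : k ≤ 0 := by
  obtain ⟨M, hM⟩ := isCompact_Icc.exists_bound_of_continuousOn hfc
  have hder : ∀ x ∈ Set.Ico (1/2:ℝ) 1,
      HasDerivAt (fun x => f x - c * x + k * Real.log (1 - x))
        (f' x - c * 1 + k * (-1 / (1 - x))) x := by
    intro x hx
    have h1 : HasDerivAt (fun x : ℝ => 1 - x) (-1) x := by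
      simpa using (hasDerivAt_id x).const_sub 1
    exact ((hfd x ⟨by linarith [hx.1], hx.2⟩).sub ((hasDerivAt_id x).const_mul c)).add
      ((h1.log (by linarith [hx.2])).const_mul k)
  have hmono : MonotoneOn (fun x => f x - c * x + k * Real.log (1 - x)) (Set.Ico (1/2:ℝ) 1) := by
    apply monotoneOn_of_deriv_nonneg (convex_Ico _ _)
    · exact fun x hx => (hder x hx).continuousAt.continuousWithinAt
    · exact fun x hx => (hder x (interior_subset hx)).differentiableAt.differentiableWithinAt
    · intro x hx
      rw [(hder x (interior_subset hx)).deriv]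
      rw [interior_Ico] at hx
      have := hge x hx
      rw [neg_div]
      linarith
  -- Evaluating at `x = 1 - exp (-y)` bounds `k * y` uniformly in `y ≥ 1`.
  have hbd : ∀ y : ℝ, 1 ≤ y → k * y ≤ 2 * M + |c| + k * Real.log 2 := by
    intro y hy
    have he : Real.exp (-y) ≤ 1/2 := by
      rw [Real.exp_neg, inv_eq_one_div]
      exact one_div_le_one_div_of_le two_pos (by linarith [Real.add_one_le_exp y])
    have hp := Real.exp_pos (-y)
    have h := hmono (a := 1/2) (b := 1 - Real.exp (-y)) ⟨le_rfl, by norm_num⟩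
      ⟨by linarith, by linarith⟩ (by linarith)
    have hl : Real.log (1 - 1/2) = - Real.log 2 := by
      rw [← Real.log_inv]; norm_num
    simp only [sub_sub_cancel, Real.log_exp, hl] at h
    have b1 := abs_le.1 (hM (1/2) ⟨by norm_num, by norm_num⟩)
    have b2 := abs_le.1 (hM (1 - Real.exp (-y)) ⟨by linarith, by linarith⟩)
    have b3 : -(c * (1/2 - Real.exp (-y))) ≤ |c| := by
      refine (neg_le_abs _).trans ?_
      rw [abs_mul]
      exact mul_le_of_le_one_right (abs_nonneg _) (abs_le.2 ⟨by linarith, by linarith⟩)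
    linarith [b1.1, b2.2]
  by_contra! hk
  have h := hbd (max 1 ((2 * M + |c| + k * Real.log 2 + 1) / k)) (le_max_left _ _)
  have h2 := mul_le_mul_of_nonneg_left (le_max_right 1 ((2 * M + |c| + k * Real.log 2 + 1) / k)) hk.le
  rw [mul_div_cancel₀ _ hk.ne'] at h2
  linarith

/-- The contribution of an atom at the endpoint `s = ±1` to the Löwner integral. -/
lemma atom_mul_le_integral (μ : Measure ℝ) [IsFiniteMeasure μ] {s t : ℝ} (hs : s = 1 ∨ s = -1)
    (ht : t ∈ Set.Ioo (0:ℝ) 1) :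
    μ.real {s} * (t / (1 - t)) ≤ ∫ l in Set.Icc (-1:ℝ) 1, t / (1 - l * (s * t)) ∂μ := by
  obtain ⟨h0, h1⟩ := ht
  have hpos : ∀ l ∈ Set.Icc (-1:ℝ) 1, 0 < 1 - l * (s * t) := by
    rintro l ⟨hl, hl'⟩
    rcases hs with rfl | rfl <;> nlinarith
  have hint : IntegrableOn (fun l => t / (1 - l * (s * t))) (Set.Icc (-1:ℝ) 1) μ :=
    ContinuousOn.integrableOn_Icc
      (continuousOn_const.div (by fun_prop) fun l hl => (hpos l hl).ne')
  have hsub : ({s} : Set ℝ) ⊆ Set.Icc (-1:ℝ) 1 := by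
    rcases hs with rfl | rfl <;> simp
  have h := setIntegral_mono_set hint
    ((ae_restrict_mem measurableSet_Icc).mono fun l hl => div_nonneg h0.le (hpos l hl).le)
    hsub.eventuallyLE
  have hss : s * (s * t) = t := by rcases hs with rfl | rfl <;> ring
  rw [integral_singleton, smul_eq_mul, hss] at h
  exact h

/-- Both endpoints `s = ±1` at once, with the singularity of the kernel moved to `x = 1`: the factor
`s` in the denominator is what the reflection `x ↦ 1 - x` produces when `s = -1`. -/
lemma atom_eq_zero {μ : Measure ℝ} [IsFiniteMeasure μ] {f f' : ℝ → ℝ} {a b s : ℝ} (hb : 0 < b)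
    (hs : s = 1 ∨ s = -1)
    (hfc : ContinuousOn f (Set.Icc (0:ℝ) 1))
    (hfd : ∀ x ∈ Set.Ioo (0:ℝ) 1, HasDerivAt f (f' x) x)
    (hrep : ∀ x ∈ Set.Ioo (0:ℝ) 1,
      f' x = a + b * ∫ l in Set.Icc (-1:ℝ) 1, (2*x - 1) / (1 - l*(s * (2*x - 1))) ∂μ) :
    μ {s} = 0 := by
  have hk : b * μ.real {s} / 2 ≤ 0 := by
    refine coeff_nonpos_of_deriv_ge (c := a - b * μ.real {s}) hfc hfd fun x hx => ?_
    have h := mul_le_mul_of_nonneg_left (atom_mul_le_integral μ hs (t := 2 * x - 1)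
      ⟨by linarith [hx.1], by linarith [hx.2]⟩) hb.le
    rw [hrep x ⟨by linarith [hx.1], hx.2⟩]
    have hx1 : 1 - x ≠ 0 := by linarith [hx.2]
    have e : (2 * x - 1) / (1 - (2 * x - 1)) = 1 / (1 - x) / 2 - 1 := by
      rw [show 1 - (2 * x - 1) = 2 * (1 - x) by ring]
      field_simp
      ring
    rw [e] at h
    linarith
  have h0 : μ.real {s} = 0 :=
    le_antisymm (by by_contra! h; linarith [mul_pos hb h]) measureReal_nonneg
  exact (measureReal_eq_zero_iff).1 h0

/-- If `φ` is continuous on `[0,1]`, differentiable on `(0,1)`, and its derivative `φ'`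
admits a Löwner representation `φ'(x) = a + b ∫ (2x−1)/(1−λ(2x−1)) dμ(λ)` with `b > 0`
and `μ` a Borel probability measure on `[−1,1]`, then `μ({−1}) = 0` and `μ({1}) = 0`. -/
theorem measure_singleton_endpoints_eq_zero
    (φ φ' : ℝ → ℝ) (a b : ℝ) (μ : Measure ℝ) [IsProbabilityMeasure μ]
    (hφc : ContinuousOn φ (Set.Icc (0:ℝ) 1))
    (hφd : ∀ x ∈ Set.Ioo (0:ℝ) 1, HasDerivAt φ (φ' x) x)
    (hb : 0 < b)
    (hμsupp : μ (Set.Icc (-1:ℝ) 1)ᶜ = 0)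
    (hrep : ∀ x ∈ Set.Ioo (0:ℝ) 1,
      φ' x = a + b * ∫ l in Set.Icc (-1:ℝ) 1, (2*x - 1) / (1 - l*(2*x - 1)) ∂μ) :
    μ {(-1:ℝ)} = 0 ∧ μ {(1:ℝ)} = 0 := by
  constructor
  · refine atom_eq_zero (f := fun x => φ (1 - x)) (f' := fun x => -φ' (1 - x)) (a := -a) hb
      (Or.inr rfl) ?_ ?_ ?_
    · exact hφc.comp (by fun_prop) fun x hx => ⟨by linarith [hx.2], by linarith [hx.1]⟩
    · intro x hx
      have h1 : HasDerivAt (fun x : ℝ => 1 - x) (-1) x := by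
        simpa using (hasDerivAt_id x).const_sub 1
      have h2 := (hφd (1 - x) ⟨by linarith [hx.2], by linarith [hx.1]⟩).comp x h1
      rw [mul_neg_one] at h2
      exact h2
    · intro x hx
      have e : ∀ l : ℝ, (2 * (1 - x) - 1) / (1 - l * (2 * (1 - x) - 1))
          = -((2 * x - 1) / (1 - l * (-1 * (2 * x - 1)))) := by
        intro l
        rw [← neg_div]
        congr 1 <;> ring
      simp only [hrep (1 - x) ⟨by linarith [hx.2], by linarith [hx.1]⟩, e, integral_neg]
      ring
  · exact atom_eq_zero hb (Or.inl rfl) hφc hφd (by simpa only [one_mul] using hrep)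
end

section
/- Let φ: [0,1] → ℝ be continuous and differentiable on (0,1), and assume the Löwner representation hypothesis with b > 0: a ∈ ℝ and μ is a Borel probability measure on [−1,1] such that φ'(x) = a + b ∫_{[−1,1]} (2x−1)/(1−λ(2x−1)) dμ(λ) for every x ∈ (0,1). If φ' is unbounded above on (0,1) (i.e., sup_{x∈(0,1)} φ'(x) = +∞), then ∫_{[1/2,1]} 1/(1−λ) dμ(λ) = +∞; if φ' is unbounded below on (0,1), then ∫_{[−1,−1/2]} 1/(1+λ) dμ(λ) = +∞. -/
/-! The two halves are exchanged by the reflection `x ↦ 1 - x`, `l ↦ -l`, so only the upper half needs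
an argument. For `0 < t = 2x - 1 < 1` the kernel `t / (1 - l t)` is at most `2` when `l ≤ 1/2` and
at most `1 / (1 - l)` when `1/2 ≤ l < 1`, so finiteness of `∫_{[1/2,1]} 1/(1-l) dμ` bounds `φ'`
above, provided `l = 1` may be ignored. This matters because `1 / (1 - 1) = 0` in Lean, so that an
atom at `1` is invisible to the integral. Continuity of `φ` at `1` rules such an atom out
(`measureReal_singleton_one`): an atom of mass `m` gives `φ'(x) ≥ a + b m t / (1 - t)`, hence `φ`
would grow at least like `-(b m / 2) log (1 - x)` near `1`.
-/

open MeasureTheory Set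

lemma one_sub_mul_pos_s7 {l t : ℝ} (hl : l ∈ Icc (-1:ℝ) 1) (ht : t ∈ Ioo (-1:ℝ) 1) :
    0 < 1 - l * t := by
  obtain ⟨h1, h2⟩ := hl
  obtain ⟨h3, h4⟩ := ht
  nlinarith [mul_nonneg (sub_nonneg.2 h1) (sub_nonneg.2 h3.le),
    mul_nonneg (sub_nonneg.2 h2) (sub_nonneg.2 h4.le),
    mul_nonneg (sub_nonneg.2 h1) (sub_nonneg.2 h4.le),
    mul_nonneg (sub_nonneg.2 h2) (sub_nonneg.2 h3.le)]

lemma integrableOn_kernel (μ : Measure ℝ) [IsFiniteMeasure μ] {t : ℝ}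
    (ht : t ∈ Ioo (-1:ℝ) 1) :
    IntegrableOn (fun l => t / (1 - l * t)) (Icc (-1:ℝ) 1) μ := by
  apply ContinuousOn.integrableOn_compact isCompact_Icc
  exact ContinuousOn.div (by fun_prop) (by fun_prop) fun l hl => (one_sub_mul_pos_s7 hl ht).ne'

/-- An atom at `1` would force a logarithmic singularity of `φ` at `1`. -/
lemma measureReal_singleton_one
    (φ φ' : ℝ → ℝ) (a b : ℝ) (μ : Measure ℝ) [IsFiniteMeasure μ]
    (hφc : ContinuousOn φ (Icc (0:ℝ) 1))
    (hφd : ∀ x ∈ Ioo (0:ℝ) 1, HasDerivAt φ (φ' x) x)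
    (hb : 0 < b)
    (hrep : ∀ x ∈ Ioo (0:ℝ) 1,
      φ' x = a + b * ∫ l in Icc (-1:ℝ) 1, (2*x - 1) / (1 - l*(2*x - 1)) ∂μ) :
    μ.real {1} = 0 := by
  by_contra hne
  set m := μ.real {1} with hm
  have hmpos : 0 < m := lt_of_le_of_ne measureReal_nonneg (Ne.symm hne)
  have hlow : ∀ x ∈ Ioo (1/2:ℝ) 1, a - b * m + b * m / 2 * (1 / (1 - x)) ≤ φ' x := by
    intro x hx
    obtain ⟨h1, h2⟩ := hx
    have ht : 2 * x - 1 ∈ Ioo (-1:ℝ) 1 := ⟨by linarith, by linarith⟩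
    have key : ∫ l in ({1} : Set ℝ), (2*x - 1) / (1 - l*(2*x - 1)) ∂μ
        ≤ ∫ l in Icc (-1:ℝ) 1, (2*x - 1) / (1 - l*(2*x - 1)) ∂μ := by
      apply setIntegral_mono_set (integrableOn_kernel μ ht)
      · filter_upwards [ae_restrict_mem measurableSet_Icc] with l hl
        exact div_nonneg (by linarith) (one_sub_mul_pos_s7 hl ht).le
      · exact (singleton_subset_iff.2 (by norm_num)).eventuallyLE
    rw [integral_singleton, smul_eq_mul, ← hm] at key
    rw [hrep x ⟨by linarith, h2⟩]
    have hx0 : (1 - x) ≠ 0 := by linarith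
    have e : (2*x - 1) / (1 - 1*(2*x - 1)) = 1 / 2 * (1 / (1 - x)) - 1 := by
      have : (1 - 1*(2*x - 1)) = 2 * (1 - x) := by ring
      rw [this]
      field_simp
      ring
    rw [e] at key
    have := mul_le_mul_of_nonneg_left key hb.le
    linarith
  -- The comparison function: `φ` minus the antiderivative of the lower bound for `φ'`.
  let g : ℝ → ℝ := fun x => φ x - (a - b * m) * x + b * m / 2 * Real.log (1 - x)
  have hgd : ∀ x ∈ Ioo (0:ℝ) 1,
      HasDerivAt g (φ' x - (a - b * m) * 1 + b * m / 2 * (-1 / (1 - x))) x := by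
    intro x hx
    exact ((hφd x hx).sub ((hasDerivAt_id x).const_mul _)).add
      ((((hasDerivAt_id x).const_sub 1).log (by simpa using (sub_pos.2 hx.2).ne')).const_mul _)
  have hmono : MonotoneOn g (Ico (1/2:ℝ) 1) := by
    apply monotoneOn_of_hasDerivWithinAt_nonneg (convex_Ico _ _)
      (f' := fun x => φ' x - (a - b * m) * 1 + b * m / 2 * (-1 / (1 - x)))
    · intro x hx
      exact (hgd x ⟨by linarith [hx.1], hx.2⟩).continuousAt.continuousWithinAt
    · intro x hx
      rw [interior_Ico] at hx
      exact (hgd x ⟨by linarith [hx.1], hx.2⟩).hasDerivWithinAt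
    · intro x hx
      rw [interior_Ico] at hx
      have := hlow x hx
      rw [neg_div]
      linarith
  obtain ⟨M, hM⟩ := (isCompact_Icc.image_of_continuousOn hφc).bddAbove
  have hlog : ∀ x ∈ Ico (1/2:ℝ) 1,
      g (1/2) - M - |a - b * m| ≤ b * m / 2 * Real.log (1 - x) := by
    intro x hx
    have h1 := hmono (by norm_num : (1/2:ℝ) ∈ Ico (1/2:ℝ) 1) hx hx.1
    have h2 : φ x ≤ M := hM ⟨x, ⟨by linarith [hx.1], hx.2.le⟩, rfl⟩
    have h3 : -|a - b * m| ≤ (a - b * m) * x := by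
      have hx' : |x| ≤ 1 := abs_le.2 ⟨by linarith [hx.1], hx.2.le⟩
      have := neg_abs_le ((a - b * m) * x)
      rw [abs_mul] at this
      nlinarith [abs_nonneg (a - b * m)]
    have h4 : g x = φ x - (a - b * m) * x + b * m / 2 * Real.log (1 - x) := rfl
    linarith
  have htend : Filter.Tendsto (fun y : ℝ => b * m / 2 * Real.log y)
      (nhdsWithin 0 (Ioi 0)) Filter.atBot :=
    Real.tendsto_log_nhdsGT_zero.const_mul_atBot (by positivity)
  have hev := htend.eventually (Filter.eventually_lt_atBot (g (1/2) - M - |a - b * m|))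
  obtain ⟨y, hy1, hy2⟩ := (hev.and (Ioc_mem_nhdsGT (by norm_num : (0:ℝ) < 1/2))).exists
  have := hlog (1 - y) ⟨by linarith [hy2.2], by linarith [hy2.1]⟩
  rw [sub_sub_cancel] at this
  linarith

/-- The upper half of the theorem. -/
lemma lintegral_eq_top_of_not_bddAbove
    (φ φ' : ℝ → ℝ) (a b : ℝ) (μ : Measure ℝ) [IsFiniteMeasure μ]
    (hφc : ContinuousOn φ (Icc (0:ℝ) 1))
    (hφd : ∀ x ∈ Ioo (0:ℝ) 1, HasDerivAt φ (φ' x) x)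
    (hb : 0 < b)
    (hrep : ∀ x ∈ Ioo (0:ℝ) 1,
      φ' x = a + b * ∫ l in Icc (-1:ℝ) 1, (2*x - 1) / (1 - l*(2*x - 1)) ∂μ)
    (hub : ¬ BddAbove (φ' '' Ioo (0:ℝ) 1)) :
    (∫⁻ l in Icc (1/2:ℝ) 1, ENNReal.ofReal (1 / (1 - l)) ∂μ) = ⊤ := by
  by_contra hfin
  apply hub
  have hatom := measureReal_singleton_one φ φ' a b μ hφc hφd hb hrep
  have hae : ∀ᵐ l ∂μ, l ≠ 1 := by
    rw [measureReal_eq_zero_iff] at hatom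
    rw [ae_iff]
    simpa using hatom
  have hint : IntegrableOn (fun l : ℝ => 1 / (1 - l)) (Icc (1/2:ℝ) 1) μ := by
    refine (lintegral_ofReal_ne_top_iff_integrable ?_ ?_).1 hfin
    · exact Measurable.aestronglyMeasurable (by fun_prop)
    · filter_upwards [ae_restrict_mem measurableSet_Icc] with l hl
      exact div_nonneg zero_le_one (by linarith [hl.2])
  let h : ℝ → ℝ := fun l => 2 + (Icc (1/2:ℝ) 1).indicator (fun l => 1 / (1 - l)) l
  have hh : IntegrableOn h (Icc (-1:ℝ) 1) μ :=
    ((integrable_const 2).add (hint.integrable_indicator measurableSet_Icc)).integrableOn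
  have hh0 : ∀ l, 0 ≤ (Icc (1/2:ℝ) 1).indicator (fun l => 1 / (1 - l)) l := by
    intro l
    apply indicator_nonneg
    intro l hl
    exact div_nonneg zero_le_one (by linarith [hl.2])
  refine ⟨a + b * ∫ l in Icc (-1:ℝ) 1, h l ∂μ, ?_⟩
  rintro _ ⟨x, ⟨hx0, hx1⟩, rfl⟩
  have ht : 2 * x - 1 ∈ Ioo (-1:ℝ) 1 := ⟨by linarith, by linarith⟩
  rw [hrep x ⟨hx0, hx1⟩]
  refine add_le_add le_rfl (mul_le_mul_of_nonneg_left ?_ hb.le)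
  refine integral_mono_ae (integrableOn_kernel μ ht) hh ?_
  filter_upwards [ae_restrict_mem measurableSet_Icc, ae_restrict_of_ae hae] with l hl hl1
  generalize 2 * x - 1 = t at ht
  have hpos := one_sub_mul_pos_s7 hl ht
  change t / (1 - l * t) ≤ 2 + _
  rcases le_or_gt t 0 with ht0 | ht0
  · have := div_nonpos_of_nonpos_of_nonneg ht0 hpos.le
    linarith [hh0 l]
  · rcases lt_or_ge l (1/2) with hl2 | hl2
    · have : t / (1 - l * t) ≤ 2 := by
        rw [div_le_iff₀ hpos]
        nlinarith [ht.2]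
      linarith [hh0 l]
    · have hl1' : 0 < 1 - l := sub_pos.2 (lt_of_le_of_ne hl.2 hl1)
      have hmem : l ∈ Icc (1/2:ℝ) 1 := ⟨hl2, hl.2⟩
      rw [indicator_of_mem hmem]
      have : t / (1 - l * t) ≤ 1 / (1 - l) := by
        rw [div_le_div_iff₀ hpos hl1']
        linarith [ht.2]
      linarith

/-- If `φ` is continuous on `[0,1]`, differentiable on `(0,1)`, and its derivative `φ'` admits
a Löwner representation with `b > 0` and `μ` a Borel probability measure on `[−1,1]`, then:
if `φ'` is unbounded above on `(0,1)` then `∫_{[1/2,1]} 1/(1−λ) dμ(λ) = +∞`, and if `φ'` is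
unbounded below on `(0,1)` then `∫_{[−1,−1/2]} 1/(1+λ) dμ(λ) = +∞`. -/
theorem inv_lintegral_eq_top_of_unbounded_deriv
    (φ φ' : ℝ → ℝ) (a b : ℝ) (μ : Measure ℝ) [IsProbabilityMeasure μ]
    (hφc : ContinuousOn φ (Set.Icc (0:ℝ) 1))
    (hφd : ∀ x ∈ Set.Ioo (0:ℝ) 1, HasDerivAt φ (φ' x) x)
    (hb : 0 < b)
    (hμsupp : μ (Set.Icc (-1:ℝ) 1)ᶜ = 0)
    (hrep : ∀ x ∈ Set.Ioo (0:ℝ) 1,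
      φ' x = a + b * ∫ l in Set.Icc (-1:ℝ) 1, (2*x - 1) / (1 - l*(2*x - 1)) ∂μ) :
    (¬ BddAbove (φ' '' Set.Ioo (0:ℝ) 1) →
      (∫⁻ l in Set.Icc (1/2:ℝ) 1, ENNReal.ofReal (1 / (1 - l)) ∂μ) = ⊤) ∧
    (¬ BddBelow (φ' '' Set.Ioo (0:ℝ) 1) →
      (∫⁻ l in Set.Icc (-1:ℝ) (-1/2), ENNReal.ofReal (1 / (1 + l)) ∂μ) = ⊤) := by
  refine ⟨lintegral_eq_top_of_not_bddAbove φ φ' a b μ hφc hφd hb hrep, fun hub => ?_⟩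
  -- Apply the upper half to the image of the data under `x ↦ 1 - x`, `l ↦ -l`.
  have hemb : MeasurableEmbedding (Neg.neg : ℝ → ℝ) := (MeasurableEquiv.neg ℝ).measurableEmbedding
  have : IsFiniteMeasure (μ.map Neg.neg) := inferInstance
  have key := lintegral_eq_top_of_not_bddAbove (fun x => φ (1 - x)) (fun x => -φ' (1 - x))
    (-a) b (μ.map Neg.neg) ?_ ?_ hb ?_ ?_
  · rw [hemb.restrict_map, hemb.lintegral_map] at key
    rw [← key]
    have : (Neg.neg ⁻¹' Icc (1/2:ℝ) 1 : Set ℝ) = Icc (-1) (-1/2) := by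
      ext l
      simp only [mem_preimage, mem_Icc]
      constructor <;> rintro ⟨h1, h2⟩ <;> constructor <;> linarith
    rw [this]
    simp only [sub_neg_eq_add]
  · refine hφc.comp (by fun_prop) fun x hx => ⟨by linarith [hx.2], by linarith [hx.1]⟩
  · intro x hx
    have := (hφd (1 - x) ⟨by linarith [hx.2], by linarith [hx.1]⟩).comp x
      ((hasDerivAt_id x).const_sub 1)
    simpa [Function.comp_def] using this
  · intro x hx
    have : (Neg.neg ⁻¹' Icc (-1:ℝ) 1 : Set ℝ) = Icc (-1) 1 := by
      ext l
      simp only [mem_preimage, mem_Icc]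
      constructor <;> rintro ⟨h1, h2⟩ <;> constructor <;> linarith
    rw [hemb.restrict_map, hemb.integral_map, this,
      hrep (1 - x) ⟨by linarith [hx.2], by linarith [hx.1]⟩, neg_add, ← mul_neg, ← integral_neg]
    congr 3
    ext l
    rw [← neg_div]
    congr 1 <;> ring
  · rintro ⟨M, hM⟩
    refine hub ⟨-M, ?_⟩
    rintro _ ⟨x, hx, rfl⟩
    have := hM ⟨1 - x, ⟨by linarith [hx.2], by linarith [hx.1]⟩, rfl⟩
    simp only [sub_sub_cancel] at this
    linarith
end
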